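/- Fix m ∈ ℕ. Let (F_n) be a sequence of non-constant random variables in the finitely generated Wiener chaos of degree m (F_n = P_n(N^{(n)}), N^{(n)} ~ γ_{K_n}, P_n in the degree-m Hermite span). If the laws of F_n converge weakly to N(0,1), then superconvergence holds: for every q ∈ ℕ there exists N ∈ ℕ such that for all n ≥ N the law of F_n has a density f_n with respect to Lebesgue measure which is of class C^q, and sup_{x∈ℝ} | f_n^{(q)}(x) − φ^{(q)}(x) | → 0 as n → ∞, where φ(x) = (2π)^{−1/2} e^{−x²/2} is the standard Gaussian density and f^{(q)} denotes the q-th derivative. -/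

import Mathlib

open MeasureTheory ProbabilityTheory MvPolynomial Filter Topology

noncomputable def gaussPi (ι : Type) [Fintype ι] : Measure (ι → ℝ) :=
  Measure.pi fun _ => gaussianReal 0 1

noncomputable def hermiteProd {K : ℕ} (k : Fin K → ℕ) : MvPolynomial (Fin K) ℝ :=
  ∏ i, Polynomial.aeval (MvPolynomial.X i) (Polynomial.hermite (k i))

noncomputable def chaos (K m : ℕ) : Submodule ℝ (MvPolynomial (Fin K) ℝ) :=
  Submodule.span ℝ {P | ∃ k : Fin K → ℕ, ∑ i, k i = m ∧ P = hermiteProd k}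

noncomputable def sqField {ι : Type} [Fintype ι] (P : MvPolynomial ι ℝ) (x : ι → ℝ) : ℝ :=
  ∑ i, (eval x (pderiv i P)) ^ 2

def TendstoInLaw {E : Type} [MeasurableSpace E] [TopologicalSpace E]
    (μs : ℕ → Measure E) (μ : Measure E) : Prop :=
  ∀ f : BoundedContinuousFunction E ℝ,
    Tendsto (fun n => ∫ x, f x ∂μs n) atTop (𝓝 (∫ x, f x ∂μ))

/-!
Let `F` lie in the chaos of degree `m ≥ 1`, so that `𝔼[∂_I F] = 0` for every multi-index `I` of
length `r < m`.

* *Contractions.* Expanding `F²` along its mean derivatives gives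
  `𝔼[F⁴] ≥ 3 𝔼[F²]² + (contractions of orders 1, …, m - 1)`. By hypercontractivity, convergence in
  law to `N(0, 1)` forces convergence of the second and fourth moments, so the contractions tend to
  `0` and the variances to `1`.
* *Decay of the decoupled form.* The characteristic function at `t` of the multilinear form
  `(X₁, …, X_m) ↦ 𝔼[∂_{X₁} ⋯ ∂_{X_m} F]` in independent Gaussian vectors is `O(t ^ (-q))` for every
  `q`, uniformly over the `F` with small contractions and variance bounded below. By induction on
  `m`: integrating out one vector leaves `exp (-t² |v|² / 2)`, where `v` is multilinear in the
  others. This is at most a power of the average of `exp (-M ∑ ⟪g_l, v⟫² / 2)` over Gaussian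
  directions `g₁, …, g_d`, that is, of the mean of `exp (i √M ∑ b_l ⟪g_l, v⟫)` over Gaussian `b`.
  With high probability all unit combinations of the derivatives `∂_{g_l} F` satisfy the induction
  hypothesis in degree `m - 1`, and a Gaussian `b` in a large dimension `d` is rarely small.
* *Decoupling.* The rotation invariance of the Gaussian measure and `m - 1` Cauchy–Schwarz steps
  bound `|𝔼[exp (itF)]| ^ (2 ^ (m - 1))` by the decoupled characteristic function.
* *Inversion.* Eventually, the characteristic functions decay to any prescribed order, uniformly in
  `n`. Fourier inversion provides the densities, and dominated convergence of
  `∫ |t| ^ q |ν̂ₙ(t) - γ̂(t)| dt` the uniform convergence of their `q`-th derivatives.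
-/

namespace WienerChaos

open scoped NNReal

/-! ### Gaussian moments -/

lemma integrable_pow_gaussianReal (μ : ℝ) (v : ℝ≥0) (n : ℕ) :
    Integrable (fun x : ℝ => x ^ n) (gaussianReal μ v) :=
  ((memLp_id_gaussianReal n).integrable_norm_pow' : Integrable (fun x : ℝ => ‖x‖ ^ n) _).mono'
    (by fun_prop) (ae_of_all _ fun x => by simp)

lemma hasDerivAt_gaussianPDFReal (μ : ℝ) (v : ℝ≥0) (x : ℝ) :
    HasDerivAt (gaussianPDFReal μ v) (-((x - μ) / v) * gaussianPDFReal μ v x) x := by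
  have h : HasDerivAt (fun y => -(y - μ) ^ 2 / (2 * v)) (-((x - μ) / v)) x :=
    ((((hasDerivAt_id x).sub_const μ).pow 2).neg.div_const (2 * (v : ℝ))).congr_deriv
      (by simp only [id]; ring)
  exact (h.exp.const_mul (√(2 * Real.pi * v))⁻¹).congr_deriv (by rw [gaussianPDFReal]; ring)

lemma integrable_pow_mul_gaussianPDFReal (μ : ℝ) {v : ℝ≥0} (hv : v ≠ 0) (n : ℕ) :
    Integrable (fun x : ℝ => x ^ n * gaussianPDFReal μ v x) := by
  have h := integrable_pow_gaussianReal μ v n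
  rw [gaussianReal_of_var_ne_zero μ hv,
    integrable_withDensity_iff_integrable_smul' (by fun_prop) (by simp [gaussianPDF])] at h
  refine h.congr (ae_of_all _ fun x => ?_)
  simp [gaussianPDF, gaussianPDFReal_nonneg, mul_comm]

lemma integral_pow_add_two_gaussianReal (v : ℝ≥0) (n : ℕ) :
    ∫ x, x ^ (n + 2) ∂gaussianReal 0 v = (n + 1) * v * ∫ x, x ^ n ∂gaussianReal 0 v := by
  rcases eq_or_ne v 0 with rfl | hv
  · simp
  have hint := integrable_pow_mul_gaussianPDFReal 0 hv
  have hparts := integral_mul_deriv_eq_deriv_mul_of_integrable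
    (u := fun x : ℝ => x ^ (n + 1)) (u' := fun x => (n + 1) * x ^ n)
    (fun x _ => by simpa using hasDerivAt_pow (n + 1) x)
    (fun x _ => hasDerivAt_gaussianPDFReal 0 v x)
    (((hint (n + 2)).const_mul (-(v : ℝ)⁻¹)).congr (ae_of_all _ fun x => by simp; ring))
    (((hint n).const_mul (n + 1 : ℝ)).congr (ae_of_all _ fun x => by simp; ring)) (hint (n + 1))
  have hleft (x : ℝ) : x ^ (n + 1) * (-((x - 0) / v) * gaussianPDFReal 0 v x) =
      -(v : ℝ)⁻¹ * (gaussianPDFReal 0 v x • x ^ (n + 2)) := by rw [smul_eq_mul]; ring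
  have hright (x : ℝ) : (n + 1) * x ^ n * gaussianPDFReal 0 v x =
      (n + 1) * (gaussianPDFReal 0 v x • x ^ n) := by rw [smul_eq_mul]; ring
  simp only [hleft, hright, integral_const_mul,
    ← integral_gaussianReal_eq_integral_smul hv] at hparts
  have : (v : ℝ) ≠ 0 := mod_cast hv
  field_simp at hparts
  linarith

/-! ### Polynomials under the Gaussian measure -/

section Expectation

variable {ι : Type} [Fintype ι]

instance : IsProbabilityMeasure (gaussPi ι) := by unfold gaussPi; infer_instance

lemma integrable_eval (Q : MvPolynomial ι ℝ) : Integrable (fun x => eval x Q) (gaussPi ι) := by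
  induction Q using MvPolynomial.induction_on' with
  | monomial s a =>
    simp only [eval_monomial, Finsupp.prod_fintype _ _ fun _ => pow_zero _]
    exact (Integrable.fintype_prod fun i => integrable_pow_gaussianReal 0 1 (s i)).const_mul a
  | add P Q hP hQ => simp only [map_add]; exact hP.add hQ

/-- Expectation of a polynomial in independent standard Gaussian variables. -/
noncomputable def expect : MvPolynomial ι ℝ →ₗ[ℝ] ℝ where
  toFun Q := ∫ x, eval x Q ∂gaussPi ι
  map_add' P Q := by
    simpa only [map_add] using integral_add (integrable_eval P) (integrable_eval Q)
  map_smul' c Q := by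
    simp only [smul_eval, RingHom.id_apply, smul_eq_mul, integral_const_mul]

lemma expect_apply (Q : MvPolynomial ι ℝ) : expect Q = ∫ x, eval x Q ∂gaussPi ι := rfl

@[simp]
lemma expect_C (c : ℝ) : expect (C c : MvPolynomial ι ℝ) = c := by simp [expect_apply]

lemma expect_C_mul (c : ℝ) (Q : MvPolynomial ι ℝ) : expect (C c * Q) = c * expect Q := by
  rw [← smul_eq_C_mul, map_smul, smul_eq_mul]

lemma expect_mono {P Q : MvPolynomial ι ℝ} (h : ∀ x, eval x P ≤ eval x Q) :
    expect P ≤ expect Q :=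
  integral_mono (integrable_eval P) (integrable_eval Q) h

lemma expect_mul_self_nonneg (Q : MvPolynomial ι ℝ) : 0 ≤ expect (Q * Q) :=
  integral_nonneg fun x => by simpa using mul_self_nonneg _

lemma expect_monomial (s : ι →₀ ℕ) (a : ℝ) :
    expect (monomial s a) = a * ∏ i, ∫ x, x ^ s i ∂gaussianReal 0 1 := by
  simp only [expect_apply, eval_monomial, Finsupp.prod_fintype _ _ fun _ => pow_zero _,
    integral_const_mul, gaussPi]
  rw [integral_fintype_prod_eq_prod (f := fun i (y : ℝ) => y ^ s i)]

lemma expect_sub_expect_mul_self (Q : MvPolynomial ι ℝ) :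
    expect ((Q - C (expect Q)) * (Q - C (expect Q))) = expect (Q * Q) - expect Q ^ 2 := by
  have hexpand : (Q - C (expect Q)) * (Q - C (expect Q)) =
      Q * Q - C (2 * expect Q) * Q + C (expect Q ^ 2) := by
    simp only [map_mul, map_pow, map_ofNat]; ring
  rw [hexpand, map_add, map_sub, expect_C_mul, expect_C]
  ring

theorem expect_X_mul (i : ι) (Q : MvPolynomial ι ℝ) : expect (X i * Q) = expect (pderiv i Q) := by
  classical
  induction Q using MvPolynomial.induction_on' with
  | monomial s a =>
    have hcompl (t : ι →₀ ℕ) (ht : ∀ j ≠ i, t j = s j) :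
        ∏ j ∈ {i}ᶜ, ∫ x, x ^ t j ∂gaussianReal 0 1 =
          ∏ j ∈ {i}ᶜ, ∫ x, x ^ s j ∂gaussianReal 0 1 :=
      Finset.prod_congr rfl fun j hj => by rw [ht j (by simpa using hj)]
    have hmoment : ∫ x, x ^ (1 + s i) ∂gaussianReal 0 1 =
        s i * ∫ x, x ^ (s i - 1) ∂gaussianReal 0 1 := by
      rcases s i with _ | n
      · simp
      · rw [show 1 + (n + 1) = n + 2 by ring, integral_pow_add_two_gaussianReal]; simp
    rw [X, monomial_mul, pderiv_monomial, expect_monomial, expect_monomial,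
      Fintype.prod_eq_mul_prod_compl i, Fintype.prod_eq_mul_prod_compl i,
      hcompl (Finsupp.single i 1 + s) fun j hj => by simp [hj.symm],
      hcompl (s - Finsupp.single i 1) fun j hj => by simp [hj.symm]]
    simp only [Finsupp.coe_add, Pi.add_apply, Finsupp.single_eq_same, Finsupp.coe_tsub,
      Pi.sub_apply, hmoment]
    ring
  | add P Q hP hQ => rw [mul_add, map_add, hP, hQ, map_add, map_add]

end Expectation

/-! ### Creation operators, number operator and chaoses -/

section Derivatives

variable {σ R : Type*} [CommRing R]

lemma pderiv_pderiv_comm (i j : σ) (Q : MvPolynomial σ R) :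
    pderiv i (pderiv j Q) = pderiv j (pderiv i Q) := by
  classical
  have hcomm : ⁅pderiv (R := R) i, pderiv (R := R) j⁆ = 0 := by
    refine derivation_ext fun k => ?_
    simp only [Derivation.commutator_apply, pderiv_X, Derivation.zero_apply, Pi.single_apply]
    split_ifs <;> simp
  simpa [Derivation.commutator_apply, sub_eq_zero] using DFunLike.congr_fun hcomm Q

/-- Polynomials all of whose partial derivatives of order `n` vanish. Over a field of
characteristic zero these are the polynomials of degree less than `n`. -/
noncomputable def derivKer (σ R : Type*) [CommRing R] : ℕ → Submodule R (MvPolynomial σ R)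
  | 0 => ⊥
  | n + 1 => ⨅ i, (derivKer σ R n).comap (pderiv i).toLinearMap

variable {n m : ℕ} {F G : MvPolynomial σ R}

@[simp]
lemma mem_derivKer_zero : F ∈ derivKer σ R 0 ↔ F = 0 := Submodule.mem_bot R

lemma mem_derivKer_succ : F ∈ derivKer σ R (n + 1) ↔ ∀ i, pderiv i F ∈ derivKer σ R n := by
  simp [derivKer]

lemma derivKer_mono : Monotone (derivKer σ R) := by
  refine monotone_nat_of_le_succ fun n => ?_
  induction n with
  | zero => exact bot_le
  | succ n ih => exact fun F hF => mem_derivKer_succ.2 fun i => ih (mem_derivKer_succ.1 hF i)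

lemma mul_mem_derivKer (hF : F ∈ derivKer σ R (m + 1)) (hG : G ∈ derivKer σ R (n + 1)) :
    F * G ∈ derivKer σ R (m + n + 1) := by
  induction hk : m + n generalizing m n F G with
  | zero =>
    obtain ⟨rfl, rfl⟩ : m = 0 ∧ n = 0 := by omega
    refine mem_derivKer_succ.2 fun i => ?_
    have hF' := mem_derivKer_succ.1 hF i
    have hG' := mem_derivKer_succ.1 hG i
    simp_all
  | succ k ih =>
    refine mem_derivKer_succ.2 fun i => ?_
    have hF' := mem_derivKer_succ.1 hF i
    have hG' := mem_derivKer_succ.1 hG i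
    rw [pderiv_mul]
    refine add_mem ?_ ?_
    · rcases m with _ | m
      · simp_all
      · exact ih hF' hG (by omega)
    · rcases n with _ | n
      · simp_all
      · exact ih hF hG' (by omega)

end Derivatives

lemma eq_C_of_mem_derivKer_one {σ : Type*} {F : MvPolynomial σ ℝ} (hF : F ∈ derivKer σ ℝ 1) :
    F = C (coeff 0 F) := by
  classical
  ext s
  rw [coeff_C]
  split_ifs with hs
  · rw [hs]
  · obtain ⟨i, hi⟩ := Finsupp.ne_iff.1 (Ne.symm hs)
    have hcoeff : coeff (s - Finsupp.single i 1) (pderiv i F) = 0 := by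
      simp [mem_derivKer_zero.1 (mem_derivKer_succ.1 hF i)]
    have hle : Finsupp.single i 1 ≤ s :=
      Finsupp.single_le_iff.2 (Nat.one_le_iff_ne_zero.2 hi)
    rw [coeff_pderiv, tsub_add_cancel_of_le hle] at hcoeff
    exact (mul_eq_zero.1 hcoeff).resolve_right (by positivity)

section Chaos

variable {ι : Type}

/-- The adjoint of `pderiv i` under the standard Gaussian measure; it raises the `i`-th Hermite
index by one. -/
noncomputable def creation (i : ι) : MvPolynomial ι ℝ →ₗ[ℝ] MvPolynomial ι ℝ :=
  LinearMap.mulLeft ℝ (X i) - (pderiv i).toLinearMap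

lemma creation_apply (i : ι) (F : MvPolynomial ι ℝ) : creation i F = X i * F - pderiv i F := rfl

lemma pderiv_creation [DecidableEq ι] (i j : ι) (F : MvPolynomial ι ℝ) :
    pderiv j (creation i F) = (if i = j then F else 0) + creation i (pderiv j F) := by
  rw [creation_apply, map_sub, pderiv_mul, pderiv_X, pderiv_pderiv_comm j i, creation_apply,
    Pi.single_apply]
  split_ifs <;> ring

lemma creation_creation_comm (i j : ι) (F : MvPolynomial ι ℝ) :
    creation i (creation j F) = creation j (creation i F) := by
  classical
  rw [creation_apply i, creation_apply j (creation i F), pderiv_creation, pderiv_creation]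
  simp only [creation_apply, pderiv_pderiv_comm i j, eq_comm (a := i)]
  ring

lemma creation_mem_derivKer {n : ℕ} {F : MvPolynomial ι ℝ} (hF : F ∈ derivKer ι ℝ n)
    (i : ι) :
    creation i F ∈ derivKer ι ℝ (n + 1) := by
  classical
  induction n generalizing F with
  | zero => rw [mem_derivKer_zero.1 hF, map_zero]; exact zero_mem _
  | succ n ih =>
    refine mem_derivKer_succ.2 fun j => ?_
    rw [pderiv_creation]
    refine add_mem ?_ (ih (mem_derivKer_succ.1 hF j))
    split_ifs
    exacts [hF, zero_mem _]

variable [Fintype ι]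

lemma expect_creation_mul (i : ι) (F G : MvPolynomial ι ℝ) :
    expect (creation i F * G) = expect (F * pderiv i G) := by
  have h := expect_X_mul i (F * G)
  rw [pderiv_mul, map_add] at h
  rw [creation_apply, sub_mul, map_sub, mul_assoc, h]
  ring

/-- The number operator, which is minus the Ornstein–Uhlenbeck generator. -/
noncomputable def numberOp : Module.End ℝ (MvPolynomial ι ℝ) :=
  ∑ i, creation i ∘ₗ (pderiv i).toLinearMap

lemma numberOp_apply (F : MvPolynomial ι ℝ) : numberOp F = ∑ i, creation i (pderiv i F) := by
  simp [numberOp]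

lemma expect_numberOp_mul (F G : MvPolynomial ι ℝ) :
    expect (numberOp F * G) = ∑ i, expect (pderiv i F * pderiv i G) := by
  simp only [numberOp_apply, Finset.sum_mul, map_sum, expect_creation_mul]

lemma pderiv_numberOp (j : ι) (F : MvPolynomial ι ℝ) :
    pderiv j (numberOp F) = numberOp (pderiv j F) + pderiv j F := by
  classical
  simp [numberOp_apply, pderiv_creation, Finset.sum_add_distrib, pderiv_pderiv_comm j, add_comm]

lemma numberOp_creation (j : ι) (F : MvPolynomial ι ℝ) :
    numberOp (creation j F) = creation j (numberOp F) + creation j F := by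
  classical
  simp only [numberOp_apply, pderiv_creation, map_add, Finset.sum_add_distrib,
    creation_creation_comm _ j, map_sum, apply_ite (creation _), map_zero, Finset.sum_ite_eq,
    Finset.mem_univ, if_true]
  exact add_comm _ _

/-- The homogeneous chaos of degree `n`, as the polynomials of degree at most `n` that are
eigenvectors of the number operator for the eigenvalue `n`. -/
noncomputable def hermiteSpace (ι : Type) [Fintype ι] (n : ℕ) : Submodule ℝ (MvPolynomial ι ℝ) :=
  Module.End.eigenspace numberOp (n : ℝ) ⊓ derivKer ι ℝ (n + 1)

variable {n : ℕ} {F G : MvPolynomial ι ℝ}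

lemma numberOp_of_mem (hF : F ∈ hermiteSpace ι n) : numberOp F = (n : ℝ) • F :=
  Module.End.mem_eigenspace_iff.1 hF.1

lemma pderiv_mem_hermiteSpace (hF : F ∈ hermiteSpace ι (n + 1)) (i : ι) :
    pderiv i F ∈ hermiteSpace ι n := by
  refine ⟨Module.End.mem_eigenspace_iff.2 ?_, mem_derivKer_succ.1 hF.2 i⟩
  have h := pderiv_numberOp i F
  rw [numberOp_of_mem hF, Derivation.map_smul, Nat.cast_succ, add_smul, one_smul] at h
  exact (add_right_cancel h).symm

lemma creation_mem_hermiteSpace (hF : F ∈ hermiteSpace ι n) (i : ι) :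
    creation i F ∈ hermiteSpace ι (n + 1) := by
  refine ⟨Module.End.mem_eigenspace_iff.2 ?_, creation_mem_derivKer hF.2 i⟩
  rw [numberOp_creation, numberOp_of_mem hF, map_smul, Nat.cast_succ, add_smul, one_smul]

lemma one_mem_hermiteSpace : (1 : MvPolynomial ι ℝ) ∈ hermiteSpace ι 0 :=
  ⟨Module.End.mem_eigenspace_iff.2 (by simp [numberOp_apply]),
    mem_derivKer_succ.2 fun i => by simp⟩

lemma exists_eq_C_of_mem_hermiteSpace_zero (hF : F ∈ hermiteSpace ι 0) : ∃ c, F = C c :=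
  ⟨_, eq_C_of_mem_derivKer_one hF.2⟩

lemma sum_expect_pderiv_mul_pderiv (hF : F ∈ hermiteSpace ι n) (G : MvPolynomial ι ℝ) :
    ∑ i, expect (pderiv i F * pderiv i G) = n * expect (F * G) := by
  rw [← expect_numberOp_mul, numberOp_of_mem hF, smul_mul_assoc, map_smul, smul_eq_mul]

end Chaos

section Hermite

variable {K : ℕ}

lemma creation_aeval_hermite_mul {i : Fin K} {G : MvPolynomial (Fin K) ℝ} (hG : pderiv i G = 0)
    (n : ℕ) :
    creation i (Polynomial.aeval (X i) (Polynomial.hermite n) * G) =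
      Polynomial.aeval (X i) (Polynomial.hermite (n + 1)) * G := by
  have hderiv : pderiv i (Polynomial.aeval (X i) (Polynomial.hermite n) : MvPolynomial (Fin K) ℝ) =
      Polynomial.aeval (X i) (Polynomial.derivative (Polynomial.hermite n)) := by
    rw [← Derivation.restrictScalars_apply ℤ, Derivation.map_aeval,
      Derivation.restrictScalars_apply, pderiv_X_self, smul_eq_mul, mul_one]
  rw [creation_apply, pderiv_mul, hG, hderiv, Polynomial.hermite_succ, map_sub, map_mul,
    Polynomial.aeval_X]
  ring

lemma pderiv_prod_aeval_X_of_notMem {s : Finset (Fin K)} {i : Fin K} (hi : i ∉ s)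
    (p : Fin K → Polynomial ℤ) :
    pderiv i (∏ j ∈ s, Polynomial.aeval (X j : MvPolynomial (Fin K) ℝ) (p j)) = 0 := by
  refine Finset.prod_induction _ (fun Q => pderiv i Q = 0)
    (fun P Q hP hQ => by simp [hP, hQ]) (by simp) fun j hj => ?_
  rw [← Derivation.restrictScalars_apply ℤ, Derivation.map_aeval,
    Derivation.restrictScalars_apply, pderiv_X_of_ne (ne_of_mem_of_not_mem hj hi), smul_zero]

lemma creation_hermiteProd (k : Fin K → ℕ) (i : Fin K) :
    creation i (hermiteProd k) = hermiteProd (k + Pi.single i 1) := by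
  rw [hermiteProd, hermiteProd, Fintype.prod_eq_mul_prod_compl i,
    creation_aeval_hermite_mul (pderiv_prod_aeval_X_of_notMem (by simp) _),
    Fintype.prod_eq_mul_prod_compl i]
  congr 1
  · simp
  · refine Finset.prod_congr rfl fun j hj => ?_
    have hji : j ≠ i := by simpa using hj
    simp [hji]

theorem chaos_le_hermiteSpace (m : ℕ) : chaos K m ≤ hermiteSpace (Fin K) m := by
  refine Submodule.span_le.2 ?_
  rintro _ ⟨k, hk, rfl⟩
  induction m generalizing k with
  | zero =>
    have hk0 : k = 0 := by ext i; simpa using Finset.sum_eq_zero_iff.1 hk i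
    simpa [hk0, hermiteProd] using one_mem_hermiteSpace
  | succ n ih =>
    obtain ⟨i, hi⟩ : ∃ i, k i ≠ 0 := by by_contra! h; simp [h] at hk
    have hle : Pi.single i 1 ≤ k := fun j => by
      rcases eq_or_ne j i with rfl | hj
      · simpa [Nat.one_le_iff_ne_zero] using hi
      · simp [hj]
    have hsum : ∑ j, (k - Pi.single i 1 : Fin K → ℕ) j = n := by
      have h := Finset.sum_add_distrib (s := Finset.univ) (f := k - Pi.single i 1)
        (g := Pi.single i 1)
      simp only [← Pi.add_apply, tsub_add_cancel_of_le hle, hk] at h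
      simpa using h.symm
    rw [← tsub_add_cancel_of_le hle, ← creation_hermiteProd]
    exact creation_mem_hermiteSpace (ih _ hsum) i

end Hermite

/-! ### Iterated derivatives and Bessel's inequality -/

section IteratedDerivatives

variable {ι : Type}

/-- The iterated partial derivative along the multi-index `I`. -/
noncomputable def iterPderiv : {r : ℕ} → (Fin r → ι) → Module.End ℝ (MvPolynomial ι ℝ)
  | 0, _ => LinearMap.id
  | _ + 1, I => iterPderiv (Fin.tail I) ∘ₗ (pderiv (I 0)).toLinearMap

@[simp]
lemma iterPderiv_zero (I : Fin 0 → ι) (F : MvPolynomial ι ℝ) : iterPderiv I F = F := rfl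

@[simp]
lemma iterPderiv_cons {r : ℕ} (i : ι) (I : Fin r → ι) (F : MvPolynomial ι ℝ) :
    iterPderiv (Fin.cons i I : Fin (r + 1) → ι) F = iterPderiv I (pderiv i F) := rfl

lemma sum_fin_succ_fun {M : Type*} [AddCommMonoid M] [Fintype ι] {r : ℕ}
    (f : (Fin (r + 1) → ι) → M) :
    ∑ I, f I = ∑ i, ∑ I : Fin r → ι, f (Fin.cons i I) := by
  rw [← Fintype.sum_prod_type']
  exact ((Fin.consEquiv fun _ => ι).sum_comp f).symm

lemma iterPderiv_pderiv {r : ℕ} (I : Fin r → ι) (i : ι) (F : MvPolynomial ι ℝ) :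
    iterPderiv I (pderiv i F) = pderiv i (iterPderiv I F) := by
  induction r generalizing F with
  | zero => rfl
  | succ r ih =>
    induction I using Fin.consCases with
    | cons j I => rw [iterPderiv_cons, iterPderiv_cons, pderiv_pderiv_comm, ih]

variable [Fintype ι]

lemma iterPderiv_mem_hermiteSpace {n r : ℕ} {F : MvPolynomial ι ℝ}
    (hF : F ∈ hermiteSpace ι (n + r)) (I : Fin r → ι) : iterPderiv I F ∈ hermiteSpace ι n := by
  induction r generalizing F with
  | zero => exact hF
  | succ r ih => exact ih (pderiv_mem_hermiteSpace hF _) _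

lemma sum_expect_pderiv_mul_self_le {d : ℕ} {Q : MvPolynomial ι ℝ}
    (hQ : Q ∈ derivKer ι ℝ (d + 1)) :
    ∑ i, expect (pderiv i Q * pderiv i Q) ≤ d * expect (Q * Q) := by
  induction d generalizing Q with
  | zero => simp [mem_derivKer_zero.1 (mem_derivKer_succ.1 hQ _)]
  | succ d ih =>
    have henergy : expect (numberOp Q * Q) = ∑ i, expect (pderiv i Q * pderiv i Q) :=
      expect_numberOp_mul Q Q
    have hnumber : expect (numberOp Q * numberOp Q) ≤ (d + 1) * expect (numberOp Q * Q) := by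
      have hsum := Finset.sum_le_sum fun i (_ : i ∈ Finset.univ) => ih (mem_derivKer_succ.1 hQ i)
      simp only [← Finset.mul_sum, ← expect_numberOp_mul] at hsum
      simp only [expect_numberOp_mul Q (numberOp Q), pderiv_numberOp, mul_add, map_add,
        Finset.sum_add_distrib, ← henergy, mul_comm (pderiv _ Q) (numberOp _)]
      linarith
    have hsquare := expect_mul_self_nonneg (numberOp Q - C (d + 1 : ℝ) * Q)
    have hexpand : (numberOp Q - C (d + 1 : ℝ) * Q) * (numberOp Q - C (d + 1 : ℝ) * Q) =
        numberOp Q * numberOp Q - C (2 * (d + 1) : ℝ) * (numberOp Q * Q) +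
          C ((d + 1) ^ 2 : ℝ) * (Q * Q) := by
      simp only [map_mul, map_pow, map_ofNat]; ring
    rw [hexpand, map_add, map_sub, expect_C_mul, expect_C_mul] at hsquare
    rw [← henergy]
    push_cast
    nlinarith [show (0 : ℝ) < d + 1 by positivity]

lemma expect_sq_le (Q : MvPolynomial ι ℝ) : expect Q ^ 2 ≤ expect (Q * Q) := by
  rw [← sub_nonneg, ← expect_sub_expect_mul_self]
  exact expect_mul_self_nonneg _

lemma sum_expect_pderiv_mul_self_le_sub {d : ℕ} {Q : MvPolynomial ι ℝ}
    (hQ : Q ∈ derivKer ι ℝ (d + 2)) :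
    ∑ i, expect (pderiv i Q * pderiv i Q) ≤ (d + 1) * (expect (Q * Q) - expect Q ^ 2) := by
  have hC : C (expect Q) ∈ derivKer ι ℝ (d + 2) :=
    derivKer_mono (Nat.le_add_left 1 _) (mem_derivKer_succ.2 fun i => by simp)
  simpa only [map_sub, pderiv_C, sub_zero, expect_sub_expect_mul_self, Nat.cast_succ]
    using sum_expect_pderiv_mul_self_le (sub_mem hQ hC)

lemma sum_expect_iterPderiv_sq_le {d : ℕ} {Q : MvPolynomial ι ℝ} (hQ : Q ∈ derivKer ι ℝ (d + 1)) :
    ∑ I : Fin d → ι, expect (iterPderiv I Q) ^ 2 ≤ d.factorial * expect (Q * Q) := by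
  induction d generalizing Q with
  | zero => simpa using expect_sq_le Q
  | succ d ih =>
    simp only [sum_fin_succ_fun, iterPderiv_cons]
    calc _ ≤ ∑ i, d.factorial * expect (pderiv i Q * pderiv i Q) :=
          Finset.sum_le_sum fun i _ => ih (mem_derivKer_succ.1 hQ i)
      _ ≤ d.factorial * ((d + 1 : ℕ) * expect (Q * Q)) := by
          rw [← Finset.mul_sum]; gcongr; exact sum_expect_pderiv_mul_self_le hQ
      _ = _ := by rw [Nat.factorial_succ]; push_cast; ring

-- Bessel's inequality for the orthogonal projections onto the constants and onto the top chaos.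
lemma expect_sq_add_sum_expect_iterPderiv_sq_le {d : ℕ} {Q : MvPolynomial ι ℝ}
    (hQ : Q ∈ derivKer ι ℝ (d + 2)) :
    expect Q ^ 2 + (∑ I : Fin (d + 1) → ι, expect (iterPderiv I Q) ^ 2) / (d + 1).factorial ≤
      expect (Q * Q) := by
  rw [← le_sub_iff_add_le', div_le_iff₀' (by positivity), sum_fin_succ_fun]
  simp only [iterPderiv_cons]
  calc _ ≤ ∑ i, d.factorial * expect (pderiv i Q * pderiv i Q) :=
        Finset.sum_le_sum fun i _ => sum_expect_iterPderiv_sq_le (mem_derivKer_succ.1 hQ i)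
    _ ≤ d.factorial * ((d + 1) * (expect (Q * Q) - expect Q ^ 2)) := by
        rw [← Finset.mul_sum]; gcongr; exact sum_expect_pderiv_mul_self_le_sub hQ
    _ = _ := by rw [Nat.factorial_succ]; push_cast; ring

end IteratedDerivatives

/-! ### The fourth moment of a homogeneous chaos -/

section BinomialExpansion

open Finset.HasAntidiagonal (antidiagonal mem_antidiagonal)

variable {R : Type*} [Ring R] [Algebra ℝ R] {x y z w : R}

lemma map_add_pow_mul_add_pow (hxy : Commute x y) (hzw : Commute z w) (f : R →ₗ[ℝ] ℝ) (k l : ℕ) :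
    f ((x + y) ^ k * (z + w) ^ l) = ∑ p ∈ antidiagonal k, ∑ q ∈ antidiagonal l,
      (k.choose p.1 * l.choose q.1) • f (x ^ p.1 * y ^ p.2 * (z ^ q.1 * w ^ q.2)) := by
  simp only [hxy.add_pow', hzw.add_pow', Finset.sum_mul_sum, map_sum, smul_mul_smul_comm, map_nsmul]

lemma map_add_pow_two_mul_mul_add_pow_two_mul (hxy : Commute x y) (hzw : Commute z w)
    (f : R →ₗ[ℝ] ℝ) {k l : ℕ}
    (hf : ∀ a b c d, a + b = 2 * k → c + d = 2 * l → (a ≠ b ∨ c ≠ d) →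
      f (x ^ a * y ^ b * (z ^ c * w ^ d)) = 0) :
    f ((x + y) ^ (2 * k) * (z + w) ^ (2 * l)) =
      ((2 * k).choose k * (2 * l).choose l) • f (x ^ k * y ^ k * (z ^ l * w ^ l)) := by
  rw [map_add_pow_mul_add_pow hxy hzw, Finset.sum_eq_single (k, k), Finset.sum_eq_single (l, l)]
  · intro q hq hne
    rw [mem_antidiagonal] at hq
    rw [hf k k q.1 q.2 (by omega) hq (.inr fun h => hne (Prod.ext (by omega) (by omega))),
      smul_zero]
  · simp [← two_mul]
  · refine fun p hp hne => Finset.sum_eq_zero fun q hq => ?_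
    rw [mem_antidiagonal] at hp hq
    rw [hf _ _ _ _ hp hq (.inl fun h => hne (Prod.ext (by omega) (by omega))), smul_zero]
  · simp [← two_mul]

lemma choose_mul_choose_mul_choose (k l : ℕ) :
    ((2 * (k + l)).choose (2 * k) * ((2 * k).choose k * (2 * l).choose l) : ℝ) =
      (2 * (k + l)).factorial / (k.factorial ^ 2 * l.factorial ^ 2) := by
  have hkl := Nat.choose_mul_factorial_mul_factorial (show 2 * k ≤ 2 * (k + l) by omega)
  have hk := Nat.choose_mul_factorial_mul_factorial (show k ≤ 2 * k by omega)
  have hl := Nat.choose_mul_factorial_mul_factorial (show l ≤ 2 * l by omega)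
  rw [← Nat.mul_sub, Nat.add_sub_cancel_left] at hkl
  rw [two_mul, Nat.add_sub_cancel, ← two_mul] at hk hl
  rw [eq_div_iff (by positivity), ← hkl, ← hk, ← hl]
  push_cast
  ring

lemma map_add_add_add_pow_two_mul (hxy : Commute x y) (hzw : Commute z w)
    (hcomm : Commute (x + y) (z + w)) (f : R →ₗ[ℝ] ℝ) {m : ℕ}
    (hf : ∀ a b c d, a + b + (c + d) = 2 * m → (a ≠ b ∨ c ≠ d) →
      f (x ^ a * y ^ b * (z ^ c * w ^ d)) = 0) :
    f ((x + y + (z + w)) ^ (2 * m)) = ∑ p ∈ antidiagonal m,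
      ((2 * m).factorial / (p.1.factorial ^ 2 * p.2.factorial ^ 2) : ℝ) *
        f (x ^ p.1 * y ^ p.1 * (z ^ p.2 * w ^ p.2)) := by
  rw [hcomm.add_pow', map_sum]
  symm
  refine Finset.sum_of_injOn (fun p => (2 * p.1, 2 * p.2)) ?_ ?_ ?_ ?_
  · rintro ⟨k, l⟩ - ⟨k', l'⟩ - h
    simpa using h
  · rintro ⟨k, l⟩ h
    simp only [Finset.mem_coe, mem_antidiagonal] at h ⊢
    omega
  · rintro ⟨k, l⟩ hkl hodd
    simp only [mem_antidiagonal] at hkl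
    rw [map_nsmul, map_add_pow_mul_add_pow hxy hzw, Finset.sum_eq_zero, smul_zero]
    refine fun p hp => Finset.sum_eq_zero fun q hq => ?_
    simp only [mem_antidiagonal] at hp hq
    rw [hf p.1 p.2 q.1 q.2 (by omega), smul_zero]
    by_contra! h
    exact hodd ⟨(p.1, q.1), by simp; omega, by simp; omega⟩
  · rintro ⟨k, l⟩ hkl
    obtain rfl : k + l = m := by simpa using hkl
    rw [map_nsmul, map_add_pow_two_mul_mul_add_pow_two_mul hxy hzw f
      fun a b c d hab hcd => hf a b c d (by omega), smul_smul, nsmul_eq_mul, Nat.cast_mul,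
      Nat.cast_mul, choose_mul_choose_mul_choose]

end BinomialExpansion

section Contractions

variable {ι : Type} [Fintype ι]

/-- The contraction of the slots in `S`: each of them is differentiated in the same direction, and
the directions are summed over. -/
noncomputable def contract {κ : Type*} [DecidableEq κ] (S : Finset κ) :
    Module.End ℝ ((κ → MvPolynomial ι ℝ) → ℝ) where
  toFun Φ F := ∑ i, Φ fun s => if s ∈ S then pderiv i (F s) else F s
  map_add' Φ Ψ := by ext F; simp [Finset.sum_add_distrib]
  map_smul' c Φ := by ext F; simp [Finset.mul_sum]

variable {κ : Type*} [DecidableEq κ]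

lemma contract_apply (S : Finset κ) (Φ : (κ → MvPolynomial ι ℝ) → ℝ) (F : κ → MvPolynomial ι ℝ) :
    contract S Φ F = ∑ i, Φ fun s => if s ∈ S then pderiv i (F s) else F s := rfl

lemma commute_contract (S T : Finset κ) :
    Commute (contract S : Module.End ℝ ((κ → MvPolynomial ι ℝ) → ℝ)) (contract T) := by
  ext Φ F
  simp only [Module.End.mul_apply, contract_apply]
  rw [Finset.sum_comm]
  refine Finset.sum_congr rfl fun i _ => Finset.sum_congr rfl fun j _ => congrArg Φ ?_
  funext s
  split_ifs <;> simp [pderiv_pderiv_comm]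

lemma contract_pow_apply (S : Finset κ) (n : ℕ) (Φ : (κ → MvPolynomial ι ℝ) → ℝ)
    (F : κ → MvPolynomial ι ℝ) :
    (contract S ^ n) Φ F =
      ∑ I : Fin n → ι, Φ fun s => if s ∈ S then iterPderiv I (F s) else F s := by
  induction n generalizing F with
  | zero => simp
  | succ n ih =>
    rw [pow_succ', Module.End.mul_apply, contract_apply, sum_fin_succ_fun]
    refine Finset.sum_congr rfl fun i _ => ?_
    rw [ih]
    refine Finset.sum_congr rfl fun I _ => congrArg Φ ?_
    funext s
    split_ifs <;> rfl

lemma contract_pow_apply_eq_zero {S : Finset κ} {s : κ} {n d : ℕ}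
    {Φ : (κ → MvPolynomial ι ℝ) → ℝ} (hΦ : ∀ F, F s ∈ derivKer ι ℝ n → Φ F = 0) :
    ∀ F, F s ∈ derivKer ι ℝ (n + if s ∈ S then d else 0) → (contract S ^ d) Φ F = 0 := by
  induction d with
  | zero => simpa using hΦ
  | succ d ih =>
    intro F hF
    rw [pow_succ', Module.End.mul_apply, contract_apply]
    refine Finset.sum_eq_zero fun i _ => ih _ ?_
    split_ifs with hs
    · rw [if_pos hs, ← add_assoc] at hF
      exact mem_derivKer_succ.1 hF i
    · simpa only [if_neg hs] using hF

/-- The product of the means of the first two and of the last two factors. -/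
noncomputable def meanProduct (F : Fin 4 → MvPolynomial ι ℝ) : ℝ :=
  expect (F 0 * F 1) * expect (F 2 * F 3)

/-- The squared Hilbert–Schmidt norm of `(I, J) ↦ 𝔼[∂_I F ∂_J G]` over multi-indices of length `r`.
For `F = I_m(f)` in the chaos of degree `m` and `G = F` it is a multiple of the squared norm of the
contraction `f ⊗_{m-r} f`. -/
noncomputable def contractionNormSq (r : ℕ) (F G : MvPolynomial ι ℝ) : ℝ :=
  ∑ I : Fin r → ι, ∑ J : Fin r → ι, expect (iterPderiv I F * iterPderiv J G) ^ 2

lemma contractionNormSq_nonneg (r : ℕ) (F G : MvPolynomial ι ℝ) : 0 ≤ contractionNormSq r F G :=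
  Finset.sum_nonneg fun _ _ => Finset.sum_nonneg fun _ _ => sq_nonneg _

lemma contractionNormSq_zero (F G : MvPolynomial ι ℝ) :
    contractionNormSq 0 F G = expect (F * G) ^ 2 := by
  simp [contractionNormSq]

lemma sum_expect_iterPderiv_mul_mul {n : ℕ} (F : Fin 4 → MvPolynomial ι ℝ) :
    ∑ I : Fin n → ι, expect (iterPderiv I (F 0 * F 1)) * expect (iterPderiv I (F 2 * F 3)) =
      (((contract {0, 2} + contract {1, 3} + (contract {0, 3} + contract {1, 2}) :
        Module.End ℝ ((Fin 4 → MvPolynomial ι ℝ) → ℝ)) ^ n) meanProduct) F := by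
  induction n generalizing F with
  | zero => simp [meanProduct]
  | succ n ih =>
    rw [sum_fin_succ_fun, pow_succ', Module.End.mul_apply]
    simp only [LinearMap.add_apply, Pi.add_apply, contract_apply, ← ih, ← Finset.sum_add_distrib]
    refine Finset.sum_congr rfl fun i _ => Finset.sum_congr rfl fun I _ => ?_
    simp only [iterPderiv_cons, pderiv_mul, map_add, Finset.mem_insert, Finset.mem_singleton]
    simp
    ring

lemma contract_mul_apply_eq_zero {S₀ S₁ S₂ S₃ : Finset κ} {a b c d n : ℕ} {s : κ}
    {Φ : (κ → MvPolynomial ι ℝ) → ℝ} (hΦ : ∀ F, F s = 0 → Φ F = 0)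
    {F : κ → MvPolynomial ι ℝ} (hF : F s ∈ derivKer ι ℝ n)
    (hn : n ≤ (if s ∈ S₃ then d else 0) + (if s ∈ S₂ then c else 0) +
      (if s ∈ S₁ then b else 0) + (if s ∈ S₀ then a else 0)) :
    ((contract S₀ ^ a * contract S₁ ^ b * (contract S₂ ^ c * contract S₃ ^ d) :
      Module.End ℝ ((κ → MvPolynomial ι ℝ) → ℝ)) Φ) F = 0 := by
  have h := contract_pow_apply_eq_zero (S := S₀) (d := a) <|
    contract_pow_apply_eq_zero (S := S₁) (d := b) <|
    contract_pow_apply_eq_zero (S := S₂) (d := c) <|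
    contract_pow_apply_eq_zero (S := S₃) (n := 0) (d := d) fun F hF =>
      hΦ F (mem_derivKer_zero.1 hF)
  refine h F (derivKer_mono ?_ hF)
  rwa [zero_add]

lemma contract_mul_meanProduct_eq_zero {m a b c d : ℕ} {F : Fin 4 → MvPolynomial ι ℝ}
    (hF : ∀ s, F s ∈ derivKer ι ℝ (m + 1)) (hsum : a + b + (c + d) = 2 * m)
    (hne : a ≠ b ∨ c ≠ d) :
    ((contract {0, 2} ^ a * contract {1, 3} ^ b * (contract {0, 3} ^ c * contract {1, 2} ^ d) :
      Module.End ℝ ((Fin 4 → MvPolynomial ι ℝ) → ℝ)) meanProduct) F = 0 := by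
  have hzero (s : Fin 4) : ∀ F : Fin 4 → MvPolynomial ι ℝ, F s = 0 → meanProduct F = 0 := by
    intro F hs
    fin_cases s <;> simp_all [meanProduct]
  obtain h | h | h | h : m < a + c ∨ m < b + d ∨ m < a + d ∨ m < b + c := by omega
  · exact contract_mul_apply_eq_zero (hzero 0) (hF 0) (by simp; omega)
  · exact contract_mul_apply_eq_zero (hzero 1) (hF 1) (by simp; omega)
  · exact contract_mul_apply_eq_zero (hzero 2) (hF 2) (by simp; omega)
  · exact contract_mul_apply_eq_zero (hzero 3) (hF 3) (by simp; omega)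

lemma sum_expect_iterPderiv_mul_iterPderiv {n : ℕ} {F : MvPolynomial ι ℝ}
    (hF : F ∈ hermiteSpace ι n) (G : MvPolynomial ι ℝ) :
    ∑ I : Fin n → ι, expect (iterPderiv I F * iterPderiv I G) = n.factorial * expect (F * G) := by
  induction n generalizing F G with
  | zero => simp
  | succ n ih =>
    simp only [sum_fin_succ_fun, iterPderiv_cons, ih (pderiv_mem_hermiteSpace hF _),
      ← Finset.mul_sum, sum_expect_pderiv_mul_pderiv hF, Nat.factorial_succ]
    push_cast
    ring

lemma expect_mul_of_mem_hermiteSpace_zero {F : MvPolynomial ι ℝ} (hF : F ∈ hermiteSpace ι 0)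
    (G : MvPolynomial ι ℝ) : expect (F * G) = expect F * expect G := by
  obtain ⟨c, rfl⟩ := exists_eq_C_of_mem_hermiteSpace_zero hF
  rw [expect_C_mul, expect_C]

lemma contract_pow_mul_contract_pow_meanProduct {c : ℕ} {F : Fin 4 → MvPolynomial ι ℝ}
    (hF : ∀ s, F s ∈ hermiteSpace ι c) :
    ((contract {0, 3} ^ c * contract {1, 2} ^ c :
      Module.End ℝ ((Fin 4 → MvPolynomial ι ℝ) → ℝ)) meanProduct) F =
      c.factorial ^ 2 * (expect (F 0 * F 3) * expect (F 1 * F 2)) := by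
  have hconst (s : Fin 4) (I : Fin c → ι) : iterPderiv I (F s) ∈ hermiteSpace ι 0 :=
    iterPderiv_mem_hermiteSpace (by simpa using hF s) I
  have h₀ := sum_expect_iterPderiv_mul_iterPderiv (hF 0) (F 3)
  have h₁ := sum_expect_iterPderiv_mul_iterPderiv (hF 1) (F 2)
  simp only [expect_mul_of_mem_hermiteSpace_zero (hconst _ _)] at h₀ h₁
  rw [sq, mul_mul_mul_comm, ← h₀, ← h₁, Finset.sum_mul_sum]
  simp only [Module.End.mul_apply, contract_pow_apply, meanProduct]
  refine Finset.sum_congr rfl fun I _ => Finset.sum_congr rfl fun J _ => ?_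
  simp [expect_mul_of_mem_hermiteSpace_zero (hconst _ _)]
  ring

lemma contract_mul_meanProduct_self {r c : ℕ} {F : MvPolynomial ι ℝ}
    (hF : F ∈ hermiteSpace ι (c + r)) :
    ((contract {0, 2} ^ r * contract {1, 3} ^ r * (contract {0, 3} ^ c * contract {1, 2} ^ c) :
      Module.End ℝ ((Fin 4 → MvPolynomial ι ℝ) → ℝ)) meanProduct) (fun _ => F) =
      c.factorial ^ 2 * contractionNormSq r F F := by
  rw [mul_assoc, Module.End.mul_apply, contract_pow_apply, contractionNormSq, Finset.mul_sum]
  refine Finset.sum_congr rfl fun I _ => ?_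
  rw [Module.End.mul_apply, contract_pow_apply, Finset.mul_sum]
  refine Finset.sum_congr rfl fun J _ => ?_
  rw [contract_pow_mul_contract_pow_meanProduct]
  · simp [sq, mul_comm (iterPderiv J F)]
  · intro s
    fin_cases s <;> simpa using iterPderiv_mem_hermiteSpace hF _

lemma sum_expect_iterPderiv_sq {m : ℕ} {F : MvPolynomial ι ℝ} (hF : F ∈ hermiteSpace ι m) :
    ∑ I : Fin (2 * m) → ι, expect (iterPderiv I (F * F)) ^ 2 =
      (2 * m).factorial *
        ∑ r ∈ Finset.range (m + 1), contractionNormSq r F F / r.factorial ^ 2 := by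
  have hexpand := map_add_add_add_pow_two_mul
    (commute_contract (ι := ι) ({0, 2} : Finset (Fin 4)) {1, 3}) (commute_contract {0, 3} {1, 2})
    (((commute_contract _ _).add_right (commute_contract _ _)).add_left
      ((commute_contract _ _).add_right (commute_contract _ _)))
    (LinearMap.proj (fun _ => F) ∘ₗ LinearMap.applyₗ meanProduct) (m := m)
    fun a b c d => contract_mul_meanProduct_eq_zero fun _ => hF.2
  have hsum := sum_expect_iterPderiv_mul_mul (n := 2 * m) fun _ : Fin 4 => F
  simp only [← sq] at hsum
  simp only [sq F] at hsum
  rw [hsum]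
  refine hexpand.trans ?_
  rw [Finset.Nat.sum_antidiagonal_eq_sum_range_succ_mk, Finset.mul_sum]
  refine Finset.sum_congr rfl fun r hr => ?_
  have hr : r ≤ m := Nat.lt_succ_iff.1 (Finset.mem_range.1 hr)
  have hself := contract_mul_meanProduct_self (r := r) (c := m - r) (F := F)
    (by rwa [Nat.sub_add_cancel hr])
  simp only [LinearMap.comp_apply, LinearMap.applyₗ_apply_apply, LinearMap.proj_apply, hself]
  field_simp

lemma contractionNormSq_self {m : ℕ} {F : MvPolynomial ι ℝ} (hF : F ∈ hermiteSpace ι m) :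
    contractionNormSq m F F = (m.factorial * expect (F * F)) ^ 2 := by
  have hconst (I : Fin m → ι) : iterPderiv I F ∈ hermiteSpace ι 0 :=
    iterPderiv_mem_hermiteSpace (by simpa using hF) I
  rw [← sum_expect_iterPderiv_mul_iterPderiv hF, sq, Finset.sum_mul_sum]
  simp only [contractionNormSq, expect_mul_of_mem_hermiteSpace_zero (hconst _)]
  exact Finset.sum_congr rfl fun I _ => Finset.sum_congr rfl fun J _ => by ring

-- The terms `r = 0` and `r = m` of the expansion supply two of the three copies of `𝔼[F²]²`.
theorem three_mul_expect_mul_self_sq_add_le {m r : ℕ} (hr : 1 ≤ r) (hrm : r < m)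
    {F : MvPolynomial ι ℝ} (hF : F ∈ hermiteSpace ι m) :
    3 * expect (F * F) ^ 2 + contractionNormSq r F F / r.factorial ^ 2 ≤
      expect (F * F * (F * F)) := by
  have hdeg : F * F ∈ derivKer ι ℝ (2 * m - 1 + 2) := by
    convert mul_mem_derivKer hF.2 hF.2 using 2
    omega
  have hbessel := expect_sq_add_sum_expect_iterPderiv_sq_le hdeg
  rw [show 2 * m - 1 + 1 = 2 * m by omega, sum_expect_iterPderiv_sq hF,
    mul_div_cancel_left₀ _ (by positivity)] at hbessel
  have hsub : {0, r, m} ⊆ Finset.range (m + 1) := by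
    intro k
    simp only [Finset.mem_insert, Finset.mem_singleton, Finset.mem_range]
    omega
  have hthree := Finset.sum_le_sum_of_subset_of_nonneg hsub
    fun r (_ : r ∈ Finset.range (m + 1)) _ =>
      div_nonneg (contractionNormSq_nonneg r F F) (sq_nonneg (r.factorial : ℝ))
  rw [Finset.sum_insert (by simp; omega), Finset.sum_pair hrm.ne, contractionNormSq_zero,
    contractionNormSq_self hF, mul_pow, mul_div_cancel_left₀ _ (by positivity)] at hthree
  simp only [Nat.factorial_zero, Nat.cast_one, one_pow, div_one] at hthree
  linarith

end Contractions

/-! ### Hypercontractivity -/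

section Hypercontractivity

variable {κ : Type*} [Fintype κ] {ι : Type} [Fintype ι]

-- Radon's inequality, by Jensen with the weights `s i / ∑ j, s j`.
lemma sum_pow_four_le {s x : κ → ℝ} (hs : ∀ i, 0 < s i) (hx : ∀ i, 0 ≤ x i) :
    (∑ i, x i) ^ 4 ≤ ∑ i, (∑ j, s j) ^ 3 / s i ^ 3 * x i ^ 4 := by
  rcases isEmpty_or_nonempty κ with _ | _
  · simp
  have hsum : 0 < ∑ j, s j := Finset.sum_pos (fun i _ => hs i) Finset.univ_nonempty
  have hjensen := Real.pow_arith_mean_le_arith_mean_pow Finset.univ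
    (fun i => s i / ∑ j, s j) (fun i => (∑ j, s j) * x i / s i)
    (fun i _ => (div_pos (hs i) hsum).le) (by rw [← Finset.sum_div, div_self hsum.ne'])
    (fun i _ => div_nonneg (mul_nonneg hsum.le (hx i)) (hs i).le) 4
  have hne (i : κ) := (hs i).ne'
  calc (∑ i, x i) ^ 4 = (∑ i, s i / (∑ j, s j) * ((∑ j, s j) * x i / s i)) ^ 4 := by
        congr 1; refine Finset.sum_congr rfl fun i _ => ?_; field_simp [hne i]
    _ ≤ _ := hjensen
    _ = _ := Finset.sum_congr rfl fun i _ => by field_simp [hne i]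

lemma expect_sum_sq_pow_four_le_of_pos {f : κ → MvPolynomial ι ℝ} {s : κ → ℝ} {C₀ : ℝ}
    (hs : ∀ i, 0 < s i) (hf : ∀ i, expect (f i ^ 8) ≤ C₀ * s i ^ 4) :
    expect ((∑ i, f i ^ 2) ^ 4) ≤ C₀ * (∑ i, s i) ^ 4 := by
  set S := ∑ i, s i
  have hS : 0 ≤ S := Finset.sum_nonneg fun i _ => (hs i).le
  calc expect ((∑ i, f i ^ 2) ^ 4) ≤ expect (∑ i, C (S ^ 3 / s i ^ 3) * f i ^ 8) :=
        expect_mono fun x => by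
          simpa [← pow_mul] using sum_pow_four_le hs fun i => sq_nonneg (eval x (f i))
    _ = ∑ i, S ^ 3 / s i ^ 3 * expect (f i ^ 8) := by simp only [map_sum, expect_C_mul]
    _ ≤ ∑ i, S ^ 3 / s i ^ 3 * (C₀ * s i ^ 4) := by
        refine Finset.sum_le_sum fun i _ => mul_le_mul_of_nonneg_left (hf i) ?_
        exact div_nonneg (pow_nonneg hS 3) (pow_nonneg (hs i).le 3)
    _ = ∑ i, C₀ * S ^ 3 * s i := Finset.sum_congr rfl fun i _ => by field_simp [(hs i).ne']
    _ = C₀ * S ^ 4 := by rw [← Finset.mul_sum]; ring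

lemma expect_sum_sq_pow_four_le {f : κ → MvPolynomial ι ℝ} {s : κ → ℝ} {C₀ : ℝ} (hC₀ : 0 ≤ C₀)
    (hs : ∀ i, 0 ≤ s i) (hf : ∀ i, expect (f i ^ 8) ≤ C₀ * s i ^ 4) :
    expect ((∑ i, f i ^ 2) ^ 4) ≤ C₀ * (∑ i, s i) ^ 4 := by
  have hlim : Tendsto (fun ε : ℝ => C₀ * (∑ i, (s i + ε)) ^ 4) (𝓝[>] 0)
      (𝓝 (C₀ * (∑ i, (s i + 0)) ^ 4)) :=
    (Continuous.tendsto (f := fun ε : ℝ => C₀ * (∑ i, (s i + ε)) ^ 4) (by fun_prop) 0).mono_left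
      nhdsWithin_le_nhds
  simp only [add_zero] at hlim
  refine ge_of_tendsto hlim ?_
  filter_upwards [self_mem_nhdsWithin] with ε hε
  refine expect_sum_sq_pow_four_le_of_pos (fun i => add_pos_of_nonneg_of_pos (hs i) hε) fun i => ?_
  refine (hf i).trans (mul_le_mul_of_nonneg_left (pow_le_pow_left₀ (hs i) ?_ 4) hC₀)
  exact le_add_of_nonneg_right (le_of_lt hε)

lemma seven_mul_pow_three_mul_le {a b : ℝ} (ha : 0 ≤ a) (hb : 0 ≤ b) :
    7 * a ^ 3 * b ≤ 1 / 2 * a ^ 4 + 19208 * b ^ 4 := by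
  rcases le_total (14 * b) a with h | h
  · nlinarith [mul_le_mul_of_nonneg_left h (pow_nonneg ha 3), pow_nonneg hb 4]
  · nlinarith [mul_le_mul_of_nonneg_right (pow_le_pow_left₀ ha h 3) hb, pow_nonneg ha 4]

lemma natCast_mul_expect_pow_eight {m : ℕ} {F : MvPolynomial ι ℝ} (hF : F ∈ hermiteSpace ι m) :
    m * expect (F ^ 8) = expect (7 * F ^ 6 * ∑ i, pderiv i F ^ 2) := by
  rw [pow_succ' F 7, ← sum_expect_pderiv_mul_pderiv hF, Finset.mul_sum, map_sum]
  refine Finset.sum_congr rfl fun i _ => congrArg expect ?_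
  rw [Derivation.leibniz_pow]
  simp only [smul_eq_mul, nsmul_eq_mul]
  push_cast
  ring

theorem exists_expect_pow_eight_le (m : ℕ) : ∃ C₀ : ℝ, 0 ≤ C₀ ∧
    ∀ {ι : Type} [Fintype ι] {F : MvPolynomial ι ℝ}, F ∈ hermiteSpace ι m →
      expect (F ^ 8) ≤ C₀ * expect (F * F) ^ 4 := by
  induction m with
  | zero =>
    refine ⟨1, zero_le_one, fun hF => ?_⟩
    obtain ⟨c, rfl⟩ := exists_eq_C_of_mem_hermiteSpace_zero hF
    rw [← map_pow, ← map_mul, expect_C, expect_C]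
    exact le_of_eq (by ring)
  | succ m ih =>
    obtain ⟨C₀, hC₀, ih⟩ := ih
    refine ⟨2 * 19208 * (C₀ * (m + 1 : ℕ) ^ 4), by positivity, fun {ι _ F} hF => ?_⟩
    have hgrad := expect_sum_sq_pow_four_le (f := fun i => pderiv i F) hC₀
      (fun i => expect_mul_self_nonneg (pderiv i F)) fun i => ih (pderiv_mem_hermiteSpace hF i)
    rw [sum_expect_pderiv_mul_pderiv hF, mul_pow] at hgrad
    have hyoung : expect (7 * F ^ 6 * ∑ i, pderiv i F ^ 2) ≤
        expect (C (1 / 2) * F ^ 8 + C 19208 * (∑ i, pderiv i F ^ 2) ^ 4) := by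
      refine expect_mono fun x => ?_
      simp only [map_add, map_mul, map_pow, map_sum, eval_C, map_ofNat]
      have h := seven_mul_pow_three_mul_le (sq_nonneg (eval x F))
        (Finset.sum_nonneg fun i (_ : i ∈ Finset.univ) => sq_nonneg (eval x (pderiv i F)))
      simpa only [← pow_mul] using h
    rw [← natCast_mul_expect_pow_eight hF, map_add, expect_C_mul, expect_C_mul,
      Nat.cast_succ] at hyoung
    have hpos : 0 ≤ m * expect (F ^ 8) := by
      rw [show F ^ 8 = F ^ 4 * F ^ 4 by ring]
      exact mul_nonneg m.cast_nonneg (expect_mul_self_nonneg _)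
    linarith

lemma exists_expect_pow_four_le_and_pow_eight_le (m : ℕ) : ∃ D : ℝ, 0 < D ∧
    ∀ {ι : Type} [Fintype ι] {F : MvPolynomial ι ℝ}, F ∈ hermiteSpace ι m →
      expect (F ^ 4) ≤ D * expect (F ^ 2) ^ 2 ∧ expect (F ^ 8) ≤ D * expect (F ^ 2) ^ 4 := by
  obtain ⟨C₀, hC₀, hC⟩ := exists_expect_pow_eight_le m
  refine ⟨C₀ + 1, by positivity, fun {ι _ F} hF => ?_⟩
  have h8 : expect (F ^ 8) ≤ (C₀ + 1) * expect (F ^ 2) ^ 4 := by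
    rw [sq F]
    exact (hC hF).trans (mul_le_mul_of_nonneg_right (by linarith) (by positivity))
  refine ⟨abs_le_of_sq_le_sq' ?_ (by positivity) |>.2, h8⟩
  calc expect (F ^ 4) ^ 2 ≤ expect (F ^ 8) := by
        rw [show F ^ 8 = F ^ 4 * F ^ 4 by ring]; exact expect_sq_le _
    _ ≤ (C₀ + 1) * expect (F ^ 2) ^ 4 := h8
    _ ≤ (C₀ + 1) ^ 2 * expect (F ^ 2) ^ 4 := by gcongr; nlinarith
    _ = _ := by ring

end Hypercontractivity

/-! ### Convergence of moments -/

section Moments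

variable {μs : ℕ → Measure ℝ} {μ : Measure ℝ} {h : ℝ → ℝ}

lemma tendsto_integral_min (hlaw : TendstoInLaw μs μ) (hc : Continuous h) (h0 : ∀ x, 0 ≤ h x)
    (T : ℝ) :
    Tendsto (fun n => ∫ x, min (h x) T ∂μs n) atTop (𝓝 (∫ x, min (h x) T ∂μ)) :=
  hlaw <| .ofNormedAddCommGroup (fun x => min (h x) T) (by fun_prop) |T| fun x => by
    rw [Real.norm_eq_abs, abs_le]
    exact ⟨le_min (by linarith [h0 x, abs_nonneg T]) (neg_abs_le T),
      (min_le_right _ _).trans (le_abs_self T)⟩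

lemma mul_sub_sq_div_le_min {y T R : ℝ} (hy : 0 ≤ y) (hT : 0 < T) (hTR : T ≤ R) :
    T / R * (y - y ^ 2 / (4 * R)) ≤ min y T := by
  have hR := hT.trans_le hTR
  have hquad : y - y ^ 2 / (4 * R) ≤ min y R := by
    refine le_min (sub_le_self _ (by positivity)) ?_
    rw [sub_le_iff_le_add, ← sub_le_iff_le_add', le_div_iff₀ (by positivity)]
    nlinarith [sq_nonneg (y - 2 * R)]
  calc _ ≤ T / R * min y R := by gcongr
    _ = min (T / R * y) T := by rw [mul_min_of_nonneg _ _ (by positivity),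
        div_mul_cancel₀ _ hR.ne']
    _ ≤ min y T := min_le_min_right _ (mul_le_of_le_one_left hy ((div_le_one hR).2 hTR))

lemma integral_min_le [IsFiniteMeasure μ] (hint : Integrable h μ) (T : ℝ) :
    ∫ x, min (h x) T ∂μ ≤ ∫ x, h x ∂μ :=
  integral_mono (hint.inf (integrable_const T)) hint fun _ => min_le_left _ _

lemma mul_sub_le_integral_min [IsFiniteMeasure μ] (h0 : ∀ x, 0 ≤ h x) (hint : Integrable h μ)
    (hint2 : Integrable (fun x => h x ^ 2) μ) {T R : ℝ} (hT : 0 < T) (hTR : T ≤ R) :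
    T / R * (∫ x, h x ∂μ - (∫ x, h x ^ 2 ∂μ) / (4 * R)) ≤ ∫ x, min (h x) T ∂μ := by
  rw [← integral_div, ← integral_sub hint (hint2.div_const _), ← integral_const_mul]
  exact integral_mono ((hint.sub (hint2.div_const _)).const_mul _)
    (hint.inf (integrable_const T)) fun x => mul_sub_sq_div_le_min (h0 x) hT hTR

variable [∀ n, IsProbabilityMeasure (μs n)] [IsProbabilityMeasure μ]

-- A Paley–Zygmund argument: a bounded ratio `∫ h² / (∫ h)²` prevents mass from escaping.
lemma eventually_integral_le_of_integral_sq_le (hlaw : TendstoInLaw μs μ) (hc : Continuous h)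
    (h0 : ∀ x, 0 ≤ h x) (hints : ∀ n, Integrable h (μs n))
    (hint2s : ∀ n, Integrable (fun x => h x ^ 2) (μs n)) (hint : Integrable h μ) {D : ℝ}
    (hD : 0 < D) (hsq : ∀ n, ∫ x, h x ^ 2 ∂μs n ≤ D * (∫ x, h x ∂μs n) ^ 2) :
    ∀ᶠ n in atTop, ∫ x, h x ∂μs n ≤ 2 * (∫ x, h x ∂μ + 1) := by
  have hs : 0 ≤ ∫ x, h x ∂μ := integral_nonneg h0
  set T := D * (∫ x, h x ∂μ + 1) with hT
  have hTpos : 0 < T := by positivity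
  have hlt : ∫ x, min (h x) T ∂μ < ∫ x, h x ∂μ + 1 :=
    (integral_min_le hint T).trans_lt (lt_add_one _)
  filter_upwards [(tendsto_integral_min hlaw hc h0 T).eventually_lt_const hlt] with n hn
  by_contra! hlarge
  set a := ∫ x, h x ∂μs n
  have ha : 0 < a := by linarith
  have hlower := mul_sub_le_integral_min h0 (hints n) (hint2s n) hTpos
    (show T ≤ D * a / 2 by rw [hT]; nlinarith)
  have hhalf : a / 2 ≤ a - (∫ x, h x ^ 2 ∂μs n) / (4 * (D * a / 2)) := by
    have : (∫ x, h x ^ 2 ∂μs n) / (4 * (D * a / 2)) ≤ a / 2 := by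
      rw [div_le_iff₀ (by positivity)]; linarith [hsq n]
    linarith
  have hscale : T / (D * a / 2) * (a / 2) = ∫ x, h x ∂μ + 1 := by rw [hT]; field_simp
  nlinarith [mul_le_mul_of_nonneg_left hhalf (show 0 ≤ T / (D * a / 2) by positivity)]

lemma tendsto_integral_of_integral_sq_le (hlaw : TendstoInLaw μs μ) (hc : Continuous h)
    (h0 : ∀ x, 0 ≤ h x) (hints : ∀ n, Integrable h (μs n))
    (hint2s : ∀ n, Integrable (fun x => h x ^ 2) (μs n)) (hint : Integrable h μ)
    (hint2 : Integrable (fun x => h x ^ 2) μ) {B : ℝ}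
    (hB : ∀ᶠ n in atTop, ∫ x, h x ^ 2 ∂μs n ≤ B) :
    Tendsto (fun n => ∫ x, h x ∂μs n) atTop (𝓝 (∫ x, h x ∂μ)) := by
  rw [Metric.tendsto_nhds]
  intro ε hε
  set B' := ∫ x, h x ^ 2 ∂μ
  set R := (|B| + |B'| + 1) / ε with hR
  have hRpos : 0 < R := by positivity
  have hsmall {b : ℝ} (hb : b ≤ |B| + |B'|) : b / (4 * R) < ε / 2 := by
    rw [div_lt_iff₀ (by positivity)]
    have : ε * R = |B| + |B'| + 1 := by rw [hR]; field_simp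
    nlinarith [abs_nonneg B, abs_nonneg B']
  have hlim := mul_sub_le_integral_min h0 hint hint2 hRpos le_rfl
  have hlim' := integral_min_le hint R
  filter_upwards [hB, (Metric.tendsto_nhds.1 (tendsto_integral_min hlaw hc h0 R)) (ε / 2)
    (by positivity)] with n hnB hn
  have hseq := mul_sub_le_integral_min h0 (hints n) (hint2s n) hRpos le_rfl
  have hseq' := integral_min_le (hints n) R
  rw [div_self hRpos.ne', one_mul] at hlim hseq
  rw [Real.dist_eq, abs_lt] at hn ⊢
  have hb := hsmall (hnB.trans (by linarith [le_abs_self B, abs_nonneg B']))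
  have hb' := hsmall (b := B') (by linarith [le_abs_self B', abs_nonneg B])
  constructor <;> linarith

end Moments

section Law

variable {ι : Type} [Fintype ι]

/-- The law of a polynomial in independent standard Gaussian variables. -/
noncomputable def polyLaw (F : MvPolynomial ι ℝ) : Measure ℝ :=
  Measure.map (fun x => eval x F) (gaussPi ι)

lemma aemeasurable_eval (F : MvPolynomial ι ℝ) :
    AEMeasurable (fun x => eval x F) (gaussPi ι) :=
  (MvPolynomial.continuous_eval F).measurable.aemeasurable

instance (F : MvPolynomial ι ℝ) : IsProbabilityMeasure (polyLaw F) :=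
  Measure.isProbabilityMeasure_map (aemeasurable_eval F)

lemma integral_polyLaw {E : Type*} [NormedAddCommGroup E] [NormedSpace ℝ E] {g : ℝ → E}
    (hg : Continuous g) (F : MvPolynomial ι ℝ) :
    ∫ y, g y ∂polyLaw F = ∫ x, g (eval x F) ∂gaussPi ι :=
  integral_map (aemeasurable_eval F) hg.aestronglyMeasurable

lemma integral_pow_polyLaw (F : MvPolynomial ι ℝ) (n : ℕ) :
    ∫ y, y ^ n ∂polyLaw F = expect (F ^ n) := by
  simp only [integral_polyLaw (by fun_prop : Continuous fun y : ℝ => y ^ n), expect_apply, map_pow]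

lemma integrable_pow_polyLaw (F : MvPolynomial ι ℝ) (n : ℕ) :
    Integrable (fun y : ℝ => y ^ n) (polyLaw F) := by
  rw [polyLaw, integrable_map_measure (by fun_prop) (aemeasurable_eval F)]
  simpa only [Function.comp_def, map_pow] using integrable_eval (F ^ n)

end Law

section ChaosMoments

variable {m : ℕ} {ι : ℕ → Type} [∀ n, Fintype (ι n)] {P : (n : ℕ) → MvPolynomial (ι n) ℝ}

lemma tendsto_expect_pow_of_eventually_le {k : ℕ}
    (hlaw : TendstoInLaw (fun n => polyLaw (P n)) (gaussianReal 0 1)) (hk : Even k) {B : ℝ}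
    (hB : ∀ᶠ n in atTop, expect (P n ^ (k * 2)) ≤ B) :
    Tendsto (fun n => expect (P n ^ k)) atTop (𝓝 (∫ x, x ^ k ∂gaussianReal 0 1)) := by
  simp only [← integral_pow_polyLaw] at hB ⊢
  refine tendsto_integral_of_integral_sq_le hlaw (by fun_prop) (fun x => hk.pow_nonneg x)
    (fun n => integrable_pow_polyLaw _ _) (fun n => ?_) (integrable_pow_gaussianReal _ _ _) ?_
    (by simpa only [← pow_mul] using hB)
  all_goals simp only [← pow_mul]
  exacts [integrable_pow_polyLaw _ _, integrable_pow_gaussianReal _ _ _]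

lemma integral_pow_two_gaussianReal : ∫ x, x ^ 2 ∂gaussianReal 0 1 = 1 := by
  simpa using integral_pow_add_two_gaussianReal 1 0

lemma integral_pow_four_gaussianReal : ∫ x, x ^ 4 ∂gaussianReal 0 1 = 3 := by
  rw [integral_pow_add_two_gaussianReal 1 2, integral_pow_two_gaussianReal]
  norm_num

lemma tendsto_expect_pow_two_and_pow_four (hP : ∀ n, P n ∈ hermiteSpace (ι n) m)
    (hlaw : TendstoInLaw (fun n => polyLaw (P n)) (gaussianReal 0 1)) :
    Tendsto (fun n => expect (P n ^ 2)) atTop (𝓝 1) ∧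
      Tendsto (fun n => expect (P n ^ 4)) atTop (𝓝 3) := by
  obtain ⟨D, hD, hhyper⟩ := exists_expect_pow_four_le_and_pow_eight_le m
  have hvar : ∀ᶠ n in atTop, expect (P n ^ 2) ≤ 4 := by
    have h := eventually_integral_le_of_integral_sq_le (h := fun x => x ^ 2) hlaw (by fun_prop)
      (fun x => sq_nonneg x) (fun n => integrable_pow_polyLaw _ _)
      (fun n => by simpa only [← pow_mul] using integrable_pow_polyLaw _ _)
      (integrable_pow_gaussianReal _ _ _) hD
      (fun n => by simpa only [← pow_mul, integral_pow_polyLaw] using (hhyper (hP n)).1)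
    norm_num [integral_pow_polyLaw, integral_pow_two_gaussianReal] at h
    exact eventually_atTop.2 h
  have hnonneg (n : ℕ) : 0 ≤ expect (P n ^ 2) := by
    simpa only [sq] using expect_mul_self_nonneg (P n)
  rw [← integral_pow_two_gaussianReal, ← integral_pow_four_gaussianReal]
  refine ⟨tendsto_expect_pow_of_eventually_le hlaw even_two (B := D * 4 ^ 2) ?_,
    tendsto_expect_pow_of_eventually_le hlaw (by decide) (B := D * 4 ^ 4) ?_⟩
  · filter_upwards [hvar] with n hn
    exact (hhyper (hP n)).1.trans
      (mul_le_mul_of_nonneg_left (pow_le_pow_left₀ (hnonneg n) hn 2) hD.le)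
  · filter_upwards [hvar] with n hn
    exact (hhyper (hP n)).2.trans
      (mul_le_mul_of_nonneg_left (pow_le_pow_left₀ (hnonneg n) hn 4) hD.le)

theorem tendsto_expect_mul_self (hP : ∀ n, P n ∈ hermiteSpace (ι n) m)
    (hlaw : TendstoInLaw (fun n => polyLaw (P n)) (gaussianReal 0 1)) :
    Tendsto (fun n => expect (P n * P n)) atTop (𝓝 1) := by
  simpa only [sq] using (tendsto_expect_pow_two_and_pow_four hP hlaw).1

theorem tendsto_contractionNormSq (hP : ∀ n, P n ∈ hermiteSpace (ι n) m)
    (hlaw : TendstoInLaw (fun n => polyLaw (P n)) (gaussianReal 0 1)) {r : ℕ} (hr : 1 ≤ r)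
    (hrm : r < m) :
    Tendsto (fun n => contractionNormSq r (P n) (P n)) atTop (𝓝 0) := by
  obtain ⟨hvar, hfour⟩ := tendsto_expect_pow_two_and_pow_four hP hlaw
  have hlim := (hfour.sub ((hvar.pow 2).const_mul 3)).const_mul ((r.factorial : ℝ) ^ 2)
  norm_num at hlim
  refine squeeze_zero (fun n => contractionNormSq_nonneg _ _ _) (fun n => ?_) hlim
  have h := three_mul_expect_mul_self_sq_add_le hr hrm (hP n)
  rw [← sq, ← sq, ← pow_mul, ← le_sub_iff_add_le', div_le_iff₀' (by positivity)] at h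
  exact h

end ChaosMoments

/-! ### The decoupled characteristic function -/

section GaussianVectors

lemma integral_pi_fin_succ {α E : Type*} [MeasurableSpace α] [NormedAddCommGroup E]
    [NormedSpace ℝ E] (μ : Measure α) [SigmaFinite μ] {k : ℕ} {f : (Fin (k + 1) → α) → E}
    (hf : Integrable f (Measure.pi fun _ => μ)) :
    ∫ X, f X ∂Measure.pi (fun _ => μ) =
      ∫ Y, ∫ g, f (Fin.cons g Y) ∂μ ∂Measure.pi fun _ : Fin k => μ := by
  have hmp := (measurePreserving_piFinSuccAbove (fun _ : Fin (k + 1) => μ) 0).symm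
  have hint := hmp.integrable_comp_of_integrable hf
  rw [← hmp.integral_comp']
  refine (integral_prod_symm _ hint).trans ?_
  simp [MeasurableEquiv.piFinSuccAbove, Fin.insertNthEquiv]

variable {ι : Type} [Fintype ι]

lemma integral_exp_sum_mul_I_gaussPi (v : ι → ℝ) :
    ∫ g, Complex.exp ((∑ i, g i * v i : ℝ) * Complex.I) ∂gaussPi ι =
      Real.exp (-(∑ i, v i ^ 2) / 2) := by
  have hprod (g : ι → ℝ) : Complex.exp ((∑ i, g i * v i : ℝ) * Complex.I) =
      ∏ i, Complex.exp (v i * g i * Complex.I) := by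
    rw [← Complex.exp_sum]
    push_cast
    simp only [Finset.sum_mul, mul_comm (v _ : ℂ)]
  have hone (t : ℝ) : ∫ x : ℝ, Complex.exp (t * x * Complex.I) ∂gaussianReal 0 1 =
      Complex.exp (-t ^ 2 / 2) := by
    rw [← charFun_apply_real, charFun_gaussianReal]
    simp [neg_div]
  simp only [hprod]
  rw [gaussPi, integral_fintype_prod_eq_prod
    (f := fun i (x : ℝ) => Complex.exp (v i * x * Complex.I))]
  simp only [hone, ← Complex.exp_sum]
  push_cast
  simp only [← Finset.sum_neg_distrib, Finset.sum_div]

lemma integral_cos_sum_gaussPi (v : ι → ℝ) :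
    ∫ g, Real.cos (∑ i, g i * v i) ∂gaussPi ι = Real.exp (-(∑ i, v i ^ 2) / 2) := by
  have hint : Integrable (fun g : ι → ℝ => Complex.exp ((∑ i, g i * v i : ℝ) * Complex.I))
      (gaussPi ι) :=
    Integrable.of_bound (Continuous.aestronglyMeasurable (by fun_prop)) 1
      (ae_of_all _ fun g => (Complex.norm_exp_ofReal_mul_I _).le)
  have hre := integral_re hint
  rw [integral_exp_sum_mul_I_gaussPi] at hre
  simpa only [RCLike.re_to_complex, Complex.exp_ofReal_mul_I_re, Complex.ofReal_re] using hre

end GaussianVectors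

section DirectionalDerivatives

variable {ι : Type} [Fintype ι]

/-- The derivative in the direction `g`. -/
noncomputable def dirDeriv (g : ι → ℝ) : Module.End ℝ (MvPolynomial ι ℝ) :=
  ∑ i, g i • (pderiv i).toLinearMap

lemma dirDeriv_apply (g : ι → ℝ) (F : MvPolynomial ι ℝ) :
    dirDeriv g F = ∑ i, g i • pderiv i F := by
  simp [dirDeriv, LinearMap.sum_apply]

lemma dirDeriv_mem_hermiteSpace {n : ℕ} {F : MvPolynomial ι ℝ}
    (hF : F ∈ hermiteSpace ι (n + 1)) (g : ι → ℝ) : dirDeriv g F ∈ hermiteSpace ι n := by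
  rw [dirDeriv_apply]
  exact Submodule.sum_mem _ fun i _ => Submodule.smul_mem _ _ (pderiv_mem_hermiteSpace hF i)

/-- The mean `𝔼[∂_{X 0} ⋯ ∂_{X (k - 1)} F]` of the iterated directional derivative of `F`. -/
noncomputable def meanDeriv : {k : ℕ} → (Fin k → ι → ℝ) → MvPolynomial ι ℝ →ₗ[ℝ] ℝ
  | 0, _ => expect
  | _ + 1, X => meanDeriv (Fin.tail X) ∘ₗ dirDeriv (X 0)

lemma meanDeriv_zero (X : Fin 0 → ι → ℝ) (F : MvPolynomial ι ℝ) : meanDeriv X F = expect F := rfl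

lemma meanDeriv_dirDeriv {k : ℕ} (g : ι → ℝ) (Y : Fin k → ι → ℝ) (F : MvPolynomial ι ℝ) :
    meanDeriv Y (dirDeriv g F) = ∑ i, g i * meanDeriv Y (pderiv i F) := by
  simp [dirDeriv_apply]

lemma meanDeriv_cons {k : ℕ} (g : ι → ℝ) (Y : Fin k → ι → ℝ) (F : MvPolynomial ι ℝ) :
    meanDeriv (Fin.cons g Y : Fin (k + 1) → ι → ℝ) F = ∑ i, g i * meanDeriv Y (pderiv i F) :=
  meanDeriv_dirDeriv g Y F

@[fun_prop]
lemma continuous_meanDeriv {k : ℕ} (F : MvPolynomial ι ℝ) :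
    Continuous fun X : Fin k → ι → ℝ => meanDeriv X F := by
  induction k generalizing F with
  | zero => exact continuous_const
  | succ k ih =>
    have htail : Continuous fun X : Fin (k + 1) → ι → ℝ => Fin.tail X := by
      unfold Fin.tail; fun_prop
    have hsum (X : Fin (k + 1) → ι → ℝ) :
        meanDeriv X F = ∑ i, X 0 i * meanDeriv (Fin.tail X) (pderiv i F) :=
      meanDeriv_dirDeriv _ _ _
    simp only [hsum]
    exact continuous_finsetSum _ fun i _ => (by fun_prop : Continuous fun X : Fin (k + 1) → ι → ℝ =>
      X 0 i).mul ((ih (pderiv i F)).comp htail)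

/-- The characteristic function at `t` of the decoupled form `X ↦ 𝔼[∂_{X 0} ⋯ ∂_{X (k - 1)} F]`
in `k` independent Gaussian directions; it is real, so a cosine suffices. -/
noncomputable def decoupledCharFun (k : ℕ) (F : MvPolynomial ι ℝ) (t : ℝ) : ℝ :=
  ∫ X : Fin k → ι → ℝ, Real.cos (t * meanDeriv X F) ∂Measure.pi fun _ => gaussPi ι

lemma integrable_cos {α : Type*} [MeasurableSpace α] {μ : Measure α} [IsFiniteMeasure μ]
    {f : α → ℝ} (hf : AEStronglyMeasurable f μ) : Integrable (fun x => Real.cos (f x)) μ :=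
  Integrable.of_bound (Real.continuous_cos.comp_aestronglyMeasurable hf) 1
    (ae_of_all _ fun _ => Real.abs_cos_le_one _)

lemma decoupledCharFun_le_one (k : ℕ) (F : MvPolynomial ι ℝ) (t : ℝ) :
    decoupledCharFun k F t ≤ 1 := by
  have hint : Integrable (fun X : Fin k → ι → ℝ => Real.cos (t * meanDeriv X F))
      (Measure.pi fun _ => gaussPi ι) :=
    integrable_cos (Continuous.aestronglyMeasurable (by fun_prop))
  simpa [decoupledCharFun] using
    integral_mono hint (integrable_const 1) fun X => Real.cos_le_one _

lemma decoupledCharFun_smul (k : ℕ) (F : MvPolynomial ι ℝ) (c t : ℝ) :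
    decoupledCharFun k (c • F) t = decoupledCharFun k F (t * c) := by
  simp only [decoupledCharFun, map_smul, smul_eq_mul, mul_assoc]

lemma decoupledCharFun_succ (k : ℕ) (F : MvPolynomial ι ℝ) (t : ℝ) :
    decoupledCharFun (k + 1) F t = ∫ Y : Fin k → ι → ℝ,
      Real.exp (-(t ^ 2 * ∑ i, meanDeriv Y (pderiv i F) ^ 2) / 2)
        ∂Measure.pi fun _ => gaussPi ι := by
  rw [decoupledCharFun, integral_pi_fin_succ _
    (integrable_cos (Continuous.aestronglyMeasurable (by fun_prop)))]
  congr 1 with Y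
  have h := integral_cos_sum_gaussPi fun i => t * meanDeriv Y (pderiv i F)
  simp only [mul_pow, ← Finset.mul_sum, mul_left_comm _ t] at h
  simp only [meanDeriv_cons, h]

end DirectionalDerivatives

/-! ### Random Gaussian directions -/

section Wick

variable {ι : Type} [DecidableEq ι]

lemma pderiv_X_eq_C (i j : ι) :
    pderiv i (X j : MvPolynomial ι ℝ) = C (if i = j then 1 else 0) := by
  rw [pderiv_X, Pi.single_apply]
  split_ifs with h h' h' <;> simp_all

variable [Fintype ι]

lemma expect_X_mul_X (i j : ι) :
    expect (X i * X j : MvPolynomial ι ℝ) = if i = j then 1 else 0 := by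
  rw [expect_X_mul, pderiv_X_eq_C, expect_C]

lemma expect_X_mul_X_mul_X_mul_X (i j k l : ι) :
    expect (X i * X j * (X k * X l) : MvPolynomial ι ℝ) =
      (if i = j then 1 else 0) * (if k = l then 1 else 0) +
      (if i = k then 1 else 0) * (if j = l then 1 else 0) +
      (if i = l then 1 else 0) * (if j = k then 1 else 0) := by
  rw [mul_assoc, expect_X_mul]
  simp only [Derivation.leibniz, smul_eq_mul, pderiv_X_eq_C, mul_add, map_add,
    mul_comm _ (C _), mul_left_comm _ (C _), expect_C_mul, expect_X_mul_X]
  ring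

end Wick

section BilinearForms

variable {ι κ : Type} [Fintype ι]

/-- The bilinear form `∑ A i j g_l i g_{l'} j` in the Gaussian vectors `g_l = x (l, ·)`. -/
noncomputable def bilinPoly (A : Matrix ι ι ℝ) (l l' : κ) : MvPolynomial (κ × ι) ℝ :=
  ∑ i, ∑ j, C (A i j) * (X (l, i) * X (l', j))

lemma eval_bilinPoly (A : Matrix ι ι ℝ) (l l' : κ) (x : κ × ι → ℝ) :
    eval x (bilinPoly A l l') = ∑ i, ∑ j, A i j * (x (l, i) * x (l', j)) := by
  simp [bilinPoly]

variable [Fintype κ]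

lemma expect_bilinPoly [DecidableEq κ] (A : Matrix ι ι ℝ) (l l' : κ) :
    expect (bilinPoly A l l') = if l = l' then A.trace else 0 := by
  classical
  simp only [bilinPoly, map_sum, expect_C_mul, expect_X_mul_X, Prod.mk.injEq]
  split_ifs with h <;> simp [h, Matrix.trace]

lemma expect_bilinPoly_mul_self [DecidableEq κ] (A : Matrix ι ι ℝ) (l l' : κ) :
    expect (bilinPoly A l l' * bilinPoly A l l') = ∑ i, ∑ j, A i j ^ 2 +
      if l = l' then A.trace ^ 2 + ∑ i, ∑ j, A i j * A j i else 0 := by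
  classical
  have hC (a b : ℝ) (Q R : MvPolynomial (κ × ι) ℝ) : C a * Q * (C b * R) = C (a * b) * (Q * R) := by
    rw [C_mul]; ring
  simp only [bilinPoly, Finset.sum_mul, Finset.mul_sum, map_sum, hC, expect_C_mul,
    expect_X_mul_X_mul_X_mul_X, Prod.mk.injEq]
  split_ifs with h
  · subst h
    simp only [true_and, mul_add, Finset.sum_add_distrib, mul_ite, mul_one, mul_zero,
      Finset.sum_ite_irrel, Finset.sum_const_zero, Finset.sum_ite_eq, Finset.sum_ite_eq',
      Finset.mem_univ, if_true, Matrix.trace, Matrix.diag_apply, sq]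
    rw [Finset.sum_comm (f := fun i j => A j i * A i j)]
    simp only [← Finset.sum_mul, ← Finset.mul_sum]
    ring
  · simp [h, sq]

lemma expect_bilinPoly_mul_self_le (A : Matrix ι ι ℝ) (l l' : κ) :
    expect (bilinPoly A l l' * bilinPoly A l l') ≤
      2 * ∑ i, ∑ j, A i j ^ 2 + expect (bilinPoly A l l') ^ 2 := by
  classical
  have hnonneg : 0 ≤ ∑ i, ∑ j, A i j ^ 2 :=
    Finset.sum_nonneg fun _ _ => Finset.sum_nonneg fun _ _ => sq_nonneg _
  have htranspose : ∑ i, ∑ j, A i j * A j i ≤ ∑ i, ∑ j, A i j ^ 2 := by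
    have hsum : ∑ i, ∑ j, 2 * (A i j * A j i) ≤ ∑ i, ∑ j, (A i j ^ 2 + A j i ^ 2) :=
      Finset.sum_le_sum fun i _ => Finset.sum_le_sum fun j _ => by
        linarith [two_mul_le_add_sq (A i j) (A j i)]
    simp only [Finset.sum_add_distrib, ← Finset.mul_sum] at hsum
    linarith [Finset.sum_comm (f := fun i j => A i j ^ 2) (s := Finset.univ) (t := Finset.univ)]
  rw [expect_bilinPoly_mul_self, expect_bilinPoly]
  split_ifs <;> linarith

end BilinearForms

section RandomDerivatives

variable {ι κ : Type} [Fintype ι]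

/-- The matrix with entries `𝔼[∂_I ∂_i F ∂_J ∂_j F]`. -/
noncomputable def gramMatrix (F : MvPolynomial ι ℝ) {r : ℕ} (I J : Fin r → ι) : Matrix ι ι ℝ :=
  Matrix.of fun i j => expect (iterPderiv I (pderiv i F) * iterPderiv J (pderiv j F))

lemma gramMatrix_apply (F : MvPolynomial ι ℝ) {r : ℕ} (I J : Fin r → ι) (i j : ι) :
    gramMatrix F I J i j = expect (iterPderiv I (pderiv i F) * iterPderiv J (pderiv j F)) := rfl

lemma sum_gramMatrix_sq (F : MvPolynomial ι ℝ) (r : ℕ) :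
    ∑ I : Fin r → ι, ∑ J, ∑ i, ∑ j, gramMatrix F I J i j ^ 2 = contractionNormSq (r + 1) F F := by
  simp only [contractionNormSq, sum_fin_succ_fun, iterPderiv_cons, gramMatrix_apply]
  rw [Finset.sum_comm (s := (Finset.univ : Finset ι))]
  refine Finset.sum_congr rfl fun I _ => ?_
  rw [Finset.sum_comm]
  exact Finset.sum_congr rfl fun i _ => Finset.sum_comm

lemma trace_gramMatrix {n r : ℕ} {F : MvPolynomial ι ℝ} (hF : F ∈ hermiteSpace ι (n + r))
    (I J : Fin r → ι) :
    (gramMatrix F I J).trace = n * expect (iterPderiv I F * iterPderiv J F) := by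
  rw [← sum_expect_pderiv_mul_pderiv (iterPderiv_mem_hermiteSpace hF I)]
  simp [Matrix.trace, gramMatrix_apply, iterPderiv_pderiv]

lemma expect_sum_smul_mul_sum_smul {κ : Type*} [Fintype κ] (b b' : κ → ℝ)
    (f g : κ → MvPolynomial ι ℝ) :
    expect ((∑ l, b l • f l) * ∑ l, b' l • g l) =
      ∑ l, ∑ l', b l * b' l' * expect (f l * g l') := by
  simp only [Finset.sum_mul_sum, smul_mul_smul_comm, map_sum, map_smul, smul_eq_mul]

lemma eval_bilinPoly_gramMatrix (F : MvPolynomial ι ℝ) {r : ℕ} (I J : Fin r → ι) (l l' : κ)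
    (x : κ × ι → ℝ) :
    eval x (bilinPoly (gramMatrix F I J) l l') =
      expect (iterPderiv I (dirDeriv (fun i => x (l, i)) F) *
        iterPderiv J (dirDeriv (fun i => x (l', i)) F)) := by
  simp only [dirDeriv_apply, map_sum, map_smul, expect_sum_smul_mul_sum_smul, eval_bilinPoly,
    gramMatrix_apply, mul_comm (expect _)]

lemma sq_sum_mul_mul_le {κ : Type*} [Fintype κ] {b : κ → ℝ} (hb : ∑ l, b l ^ 2 = 1)
    (e : κ → κ → ℝ) :
    (∑ l, ∑ l', b l * b l' * e l l') ^ 2 ≤ ∑ l, ∑ l', e l l' ^ 2 := by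
  have h := Finset.sum_mul_sq_le_sq_mul_sq (Finset.univ ×ˢ Finset.univ : Finset (κ × κ))
    (fun x => b x.1 * b x.2) (fun x => e x.1 x.2)
  simpa only [Finset.sum_product, mul_pow, ← Finset.sum_mul_sum, hb, one_mul] using h

lemma contractionNormSq_sum_smul_le {κ : Type*} [Fintype κ] {b : κ → ℝ} (hb : ∑ l, b l ^ 2 = 1)
    (r : ℕ) (f : κ → MvPolynomial ι ℝ) :
    contractionNormSq r (∑ l, b l • f l) (∑ l, b l • f l) ≤
      ∑ l, ∑ l', contractionNormSq r (f l) (f l') := by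
  simp only [contractionNormSq, map_sum, map_smul, expect_sum_smul_mul_sum_smul]
  calc _ ≤ ∑ I : Fin r → ι, ∑ J : Fin r → ι, ∑ l, ∑ l',
        expect (iterPderiv I (f l) * iterPderiv J (f l')) ^ 2 :=
        Finset.sum_le_sum fun I _ => Finset.sum_le_sum fun J _ => sq_sum_mul_mul_le hb _
    _ = _ := by
        simpa only [Fintype.sum_prod_type] using Finset.sum_comm (s := Finset.univ)
          (t := Finset.univ) (f := fun (p : (Fin r → ι) × (Fin r → ι)) (q : κ × κ) =>
            expect (iterPderiv p.1 (f q.1) * iterPderiv p.2 (f q.2)) ^ 2)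

variable [Fintype κ]

lemma exists_eval_eq_contractionNormSq_dirDeriv {n r : ℕ} {F : MvPolynomial ι ℝ}
    (hF : F ∈ hermiteSpace ι (n + r)) (l l' : κ) : ∃ Q : MvPolynomial (κ × ι) ℝ,
    (∀ x, eval x Q = contractionNormSq r (dirDeriv (fun i => x (l, i)) F)
      (dirDeriv (fun i => x (l', i)) F)) ∧
    expect Q ≤ 2 * contractionNormSq (r + 1) F F + n ^ 2 * contractionNormSq r F F := by
  classical
  refine ⟨∑ I : Fin r → ι, ∑ J : Fin r → ι,
    bilinPoly (gramMatrix F I J) l l' * bilinPoly (gramMatrix F I J) l l', fun x => ?_, ?_⟩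
  · simp only [map_sum, map_mul, eval_bilinPoly_gramMatrix, contractionNormSq, sq]
  have hmean (I J : Fin r → ι) : expect (bilinPoly (gramMatrix F I J) l l') ^ 2 ≤
      n ^ 2 * expect (iterPderiv I F * iterPderiv J F) ^ 2 := by
    rw [expect_bilinPoly, trace_gramMatrix hF, ← mul_pow]
    split_ifs
    · exact le_rfl
    · simpa using by positivity
  calc _ ≤ ∑ I : Fin r → ι, ∑ J : Fin r → ι, (2 * ∑ i, ∑ j, gramMatrix F I J i j ^ 2 +
        n ^ 2 * expect (iterPderiv I F * iterPderiv J F) ^ 2) := by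
        simp only [map_sum]
        gcongr with I _ J _
        exact (expect_bilinPoly_mul_self_le _ l l').trans (by gcongr; exact hmean I J)
    _ = _ := by
        simp only [Finset.sum_add_distrib, ← Finset.mul_sum, sum_gramMatrix_sq, contractionNormSq]

lemma exists_eval_eq_expect_dirDeriv_mul_sub_sq [DecidableEq κ] {n : ℕ} {F : MvPolynomial ι ℝ}
    (hF : F ∈ hermiteSpace ι n) (l l' : κ) : ∃ Q : MvPolynomial (κ × ι) ℝ,
    (∀ x, eval x Q = (expect (dirDeriv (fun i => x (l, i)) F * dirDeriv (fun i => x (l', i)) F) -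
      if l = l' then n * expect (F * F) else 0) ^ 2) ∧
    expect Q ≤ 2 * contractionNormSq 1 F F := by
  let I₀ : Fin 0 → ι := Fin.elim0
  have hmean : expect (bilinPoly (gramMatrix F I₀ I₀) l l') =
      if l = l' then n * expect (F * F) else 0 := by
    rw [expect_bilinPoly, trace_gramMatrix (r := 0) hF, iterPderiv_zero]
  refine ⟨(bilinPoly (gramMatrix F I₀ I₀) l l' - C (expect (bilinPoly (gramMatrix F I₀ I₀) l l'))) *
    (bilinPoly (gramMatrix F I₀ I₀) l l' - C (expect (bilinPoly (gramMatrix F I₀ I₀) l l'))),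
    fun x => ?_, ?_⟩
  · rw [map_mul, map_sub, eval_C, hmean, eval_bilinPoly_gramMatrix, sq, iterPderiv_zero,
      iterPderiv_zero]
  · have hA : ∑ i, ∑ j, gramMatrix F I₀ I₀ i j ^ 2 = contractionNormSq 1 F F := by
      rw [← sum_gramMatrix_sq, Fintype.sum_subsingleton _ I₀, Fintype.sum_subsingleton _ I₀]
    rw [expect_sub_expect_mul_self, ← hA]
    linarith [expect_bilinPoly_mul_self_le (gramMatrix F I₀ I₀) l l']

section DirectionDefect

variable [DecidableEq κ]

/-- For `F` in the chaos of degree `m + 1` and the Gaussian directions `g_l = x (l, ·)`, this is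
small when the derivatives `∂_{g_l} F` are nearly orthogonal with variance `(m + 1) 𝔼[F ^ 2]` and
their mutual contractions are small. -/
noncomputable def directionDefect (m : ℕ) (F : MvPolynomial ι ℝ) (x : κ × ι → ℝ) : ℝ :=
  ∑ l, ∑ l',
    ((expect (dirDeriv (fun i => x (l, i)) F * dirDeriv (fun i => x (l', i)) F) -
        if l = l' then (m + 1 : ℕ) * expect (F * F) else 0) ^ 2 +
      ∑ r ∈ Finset.Ico 1 m,
        contractionNormSq r (dirDeriv (fun i => x (l, i)) F) (dirDeriv (fun i => x (l', i)) F))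

variable {m : ℕ} {F : MvPolynomial ι ℝ}

lemma exists_eval_eq_directionDefect (hm : 1 ≤ m) (hF : F ∈ hermiteSpace ι (m + 1)) {τ : ℝ}
    (hτ : ∀ r, 1 ≤ r → r < m + 1 → contractionNormSq r F F ≤ τ) :
    ∃ Q : MvPolynomial (κ × ι) ℝ, (∀ x, eval x Q = directionDefect m F x) ∧
      expect Q ≤ Fintype.card κ ^ 2 * (2 + m * (2 + (m + 1) ^ 2)) * τ := by
  have hτ0 : 0 ≤ τ := (contractionNormSq_nonneg 1 F F).trans (hτ 1 le_rfl (by omega))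
  choose R hR hRle using exists_eval_eq_expect_dirDeriv_mul_sub_sq (κ := κ) hF
  have hcontr (r : ℕ) (hr : r ∈ Finset.Ico 1 m) (l l' : κ) : ∃ Q : MvPolynomial (κ × ι) ℝ,
      (∀ x, eval x Q = contractionNormSq r (dirDeriv (fun i => x (l, i)) F)
        (dirDeriv (fun i => x (l', i)) F)) ∧ expect Q ≤ (2 + (m + 1) ^ 2) * τ := by
    rw [Finset.mem_Ico] at hr
    obtain ⟨n, hn⟩ : ∃ n, m + 1 = n + r := ⟨m + 1 - r, by omega⟩
    obtain ⟨Q, hQ, hle⟩ := exists_eval_eq_contractionNormSq_dirDeriv (hn ▸ hF) l l'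
    have hnm : (n : ℝ) ≤ m + 1 := by exact_mod_cast (by omega : n ≤ m + 1)
    refine ⟨Q, hQ, hle.trans ?_⟩
    rw [add_mul]
    gcongr
    · exact hτ (r + 1) (by omega) (by omega)
    · exact contractionNormSq_nonneg r F F
    · exact hτ r hr.1 (by omega)
  choose! S hS hSle using hcontr
  refine ⟨∑ l, ∑ l', (R l l' + ∑ r ∈ Finset.Ico 1 m, S r l l'), fun x => ?_, ?_⟩
  · simp only [map_sum, map_add, hR, directionDefect]
    exact Finset.sum_congr rfl fun l _ => Finset.sum_congr rfl fun l' _ =>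
      congrArg _ (Finset.sum_congr rfl fun r hr => hS r hr l l' x)
  calc _ ≤ ∑ _l : κ, ∑ _l' : κ, (2 * τ + ∑ _r ∈ Finset.Ico 1 m, (2 + (m + 1) ^ 2) * τ) := by
        simp only [map_sum, map_add]
        gcongr with l _ l' _ r hr
        · exact (hRle l l').trans (by gcongr; exact hτ 1 le_rfl (by omega))
        · exact hSle r hr l l'
    _ = Fintype.card κ ^ 2 * (2 + (m - 1 : ℕ) * (2 + (m + 1) ^ 2)) * τ := by
        simp only [Finset.sum_const, Finset.card_univ, Nat.card_Ico, nsmul_eq_mul]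
        ring
    _ ≤ _ := by gcongr; omega

section Deterministic

variable {x : κ × ι → ℝ} {b : κ → ℝ} (hb : ∑ l, b l ^ 2 = 1)
include hb

lemma contractionNormSq_sum_smul_dirDeriv_le {r : ℕ} (hr : 1 ≤ r) (hrm : r < m) :
    contractionNormSq r (∑ l, b l • dirDeriv (fun i => x (l, i)) F)
      (∑ l, b l • dirDeriv (fun i => x (l, i)) F) ≤ directionDefect m F x := by
  refine (contractionNormSq_sum_smul_le hb r _).trans ?_
  unfold directionDefect
  gcongr with l _ l' _
  refine le_add_of_nonneg_of_le (sq_nonneg _) ?_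
  exact Finset.single_le_sum (f := fun r => contractionNormSq r (dirDeriv (fun i => x (l, i)) F)
    (dirDeriv (fun i => x (l', i)) F)) (fun r _ => contractionNormSq_nonneg r _ _)
    (Finset.mem_Ico.2 ⟨hr, hrm⟩)

lemma half_le_expect_sum_smul_dirDeriv_mul_self {c : ℝ} (hc : 0 ≤ c) (hcF : c ≤ expect (F * F))
    (hx : directionDefect m F x ≤ c ^ 2 / 4) :
    c / 2 ≤ expect ((∑ l, b l • dirDeriv (fun i => x (l, i)) F) *
      ∑ l, b l • dirDeriv (fun i => x (l, i)) F) := by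
  set e : κ → κ → ℝ := fun l l' =>
    expect (dirDeriv (fun i => x (l, i)) F * dirDeriv (fun i => x (l', i)) F) -
      if l = l' then (m + 1 : ℕ) * expect (F * F) else 0 with he
  have hdefect : ∑ l, ∑ l', e l l' ^ 2 ≤ directionDefect m F x := by
    unfold directionDefect
    gcongr with l _ l' _
    exact le_add_of_nonneg_right (Finset.sum_nonneg fun r _ => contractionNormSq_nonneg r _ _)
  have hsplit : ∑ l, ∑ l', b l * b l' *
      expect (dirDeriv (fun i => x (l, i)) F * dirDeriv (fun i => x (l', i)) F) =
        (m + 1 : ℕ) * expect (F * F) + ∑ l, ∑ l', b l * b l' * e l l' := by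
    simp only [he, mul_sub, Finset.sum_sub_distrib, mul_ite, mul_zero, Finset.sum_ite_eq,
      Finset.mem_univ, if_true, ← Finset.sum_mul, ← sq, hb]
    ring
  have hcross : |∑ l, ∑ l', b l * b l' * e l l'| ≤ c / 2 :=
    abs_le_of_sq_le_sq (by linarith [sq_sum_mul_mul_le hb e]) (by positivity)
  rw [expect_sum_smul_mul_sum_smul, hsplit]
  push_cast
  nlinarith [(abs_le.1 hcross).1, mul_nonneg m.cast_nonneg (hc.trans hcF)]

end Deterministic

end DirectionDefect

theorem exists_measurableSet_directions {m : ℕ} (hm : 1 ≤ m) {c τ' p : ℝ} (hc : 0 < c)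
    (hτ' : 0 < τ') (hp : 0 < p) : ∃ τ : ℝ, 0 < τ ∧ ∀ (ι : Type) [Fintype ι] (F : MvPolynomial ι ℝ),
      F ∈ hermiteSpace ι (m + 1) → c ≤ expect (F * F) →
      (∀ r, 1 ≤ r → r < m + 1 → contractionNormSq r F F ≤ τ) →
      ∃ S : Set (κ × ι → ℝ), MeasurableSet S ∧ (gaussPi (κ × ι)).real Sᶜ ≤ p ∧
        ∀ x ∈ S, ∀ b : κ → ℝ, ∑ l, b l ^ 2 = 1 →
          c / 2 ≤ expect ((∑ l, b l • dirDeriv (fun i => x (l, i)) F) *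
            ∑ l, b l • dirDeriv (fun i => x (l, i)) F) ∧
          ∀ r, 1 ≤ r → r < m →
            contractionNormSq r (∑ l, b l • dirDeriv (fun i => x (l, i)) F)
              (∑ l, b l • dirDeriv (fun i => x (l, i)) F) ≤ τ' := by
  classical
  set δ := min (c ^ 2 / 4) τ'
  have hδ : 0 < δ := lt_min (by positivity) hτ'
  set B : ℝ := Fintype.card κ ^ 2 * (2 + m * (2 + (m + 1) ^ 2))
  have hB : 0 < B + 1 := by positivity
  refine ⟨δ * p / (B + 1), div_pos (mul_pos hδ hp) hB, fun ι _ F hF hcF hτ => ?_⟩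
  obtain ⟨Q, hQ, hQle⟩ := exists_eval_eq_directionDefect (κ := κ) hm hF hτ
  have hQ0 (x : κ × ι → ℝ) : 0 ≤ eval x Q := by
    rw [hQ]
    exact Finset.sum_nonneg fun l _ => Finset.sum_nonneg fun l' _ => add_nonneg (sq_nonneg _)
      (Finset.sum_nonneg fun r _ => contractionNormSq_nonneg r _ _)
  refine ⟨{x | eval x Q < δ}, measurableSet_lt (continuous_eval Q).measurable measurable_const,
    ?_, fun x hx b hb => ?_⟩
  · have hmarkov := mul_meas_ge_le_integral_of_nonneg (ae_of_all _ hQ0) (integrable_eval Q) δ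
    have hle : B * (δ * p / (B + 1)) ≤ δ * p := by
      rw [mul_div_assoc', div_le_iff₀ hB]
      nlinarith [mul_pos hδ hp]
    simpa only [Set.compl_ofPred, not_lt] using
      le_of_mul_le_mul_left (hmarkov.trans (hQle.trans hle)) hδ
  · have hx' : directionDefect m F x ≤ δ := (hQ x ▸ hx.le : _)
    exact ⟨half_le_expect_sum_smul_dirDeriv_mul_self hb hc.le hcF (hx'.trans (min_le_left _ _)),
      fun r hr hrm => (contractionNormSq_sum_smul_dirDeriv_le hb hr hrm).trans
        (hx'.trans (min_le_right _ _))⟩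

end RandomDerivatives

/-! ### Polynomial decay of the decoupled characteristic function -/

section SmallBall

lemma gaussianPDFReal_zero_one_le (x : ℝ) : gaussianPDFReal 0 1 x ≤ 1 / 2 := by
  have hsqrt : 2 ≤ √(2 * Real.pi) := Real.le_sqrt_of_sq_le (by linarith [Real.pi_gt_three])
  have hexp : Real.exp (-(x - 0) ^ 2 / (2 * 1)) ≤ 1 :=
    Real.exp_le_one_iff.2 (by linarith [sq_nonneg (x - 0)])
  simp only [gaussianPDFReal, NNReal.coe_one, mul_one, one_div] at hexp ⊢
  exact (mul_le_of_le_one_right (by positivity) hexp).trans (inv_anti₀ two_pos hsqrt)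

lemma gaussianReal_zero_one_Ioo_le (s : ℝ) :
    gaussianReal 0 1 (Set.Ioo (-s) s) ≤ ENNReal.ofReal s := by
  rw [gaussianReal_apply 0 one_ne_zero]
  calc ∫⁻ x in Set.Ioo (-s) s, gaussianPDF 0 1 x
      ≤ ∫⁻ _ in Set.Ioo (-s) s, ENNReal.ofReal (1 / 2) :=
        lintegral_mono fun x => ENNReal.ofReal_le_ofReal (gaussianPDFReal_zero_one_le x)
    _ = ENNReal.ofReal s := by
        rw [setLIntegral_const, Real.volume_Ioo, ← ENNReal.ofReal_mul (by norm_num)]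
        ring_nf

lemma gaussPi_real_sum_sq_lt_le (κ : Type) [Fintype κ] {s : ℝ} (hs : 0 ≤ s) :
    (gaussPi κ).real {b | ∑ l, b l ^ 2 < s ^ 2} ≤ s ^ Fintype.card κ := by
  have hsub : {b : κ → ℝ | ∑ l, b l ^ 2 < s ^ 2} ⊆ Set.univ.pi fun _ => Set.Ioo (-s) s :=
    fun b hb l _ => abs_lt.1 <| abs_lt_of_sq_lt_sq
      ((Finset.single_le_sum (f := fun l => b l ^ 2) (fun _ _ => sq_nonneg _)
        (Finset.mem_univ l)).trans_lt hb) hs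
  refine ENNReal.toReal_le_of_le_ofReal (by positivity) ?_
  calc gaussPi κ _ ≤ gaussPi κ (Set.univ.pi fun _ => Set.Ioo (-s) s) := measure_mono hsub
    _ = gaussianReal 0 1 (Set.Ioo (-s) s) ^ Fintype.card κ := by
        rw [gaussPi, Measure.pi_pi, Finset.prod_const, Finset.card_univ]
    _ ≤ ENNReal.ofReal (s ^ Fintype.card κ) := by
        rw [ENNReal.ofReal_pow hs]
        gcongr
        exact gaussianReal_zero_one_Ioo_le s

end SmallBall

section Averaging

variable {ι κ : Type} [Fintype ι] [Fintype κ] {k : ℕ} (f : κ → MvPolynomial ι ℝ)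

lemma integrable_cos_mul_sum_meanDeriv (t : ℝ) :
    Integrable (fun x : (Fin k → ι → ℝ) × (κ → ℝ) =>
        Real.cos (t * ∑ l, x.2 l * meanDeriv x.1 (f l)))
      ((Measure.pi fun _ => gaussPi ι).prod (gaussPi κ)) :=
  integrable_cos (Continuous.aestronglyMeasurable (by fun_prop))

lemma integrable_decoupledCharFun_sum_smul (t : ℝ) :
    Integrable (fun b => decoupledCharFun k (∑ l, b l • f l) t) (gaussPi κ) := by
  simpa only [decoupledCharFun, map_sum, map_smul, smul_eq_mul] using
    (integrable_cos_mul_sum_meanDeriv f t).integral_prod_right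

lemma integral_exp_sum_meanDeriv_sq (t : ℝ) :
    ∫ Y : Fin k → ι → ℝ, Real.exp (-(t ^ 2 * ∑ l, meanDeriv Y (f l) ^ 2) / 2)
      ∂Measure.pi (fun _ => gaussPi ι) =
        ∫ b, decoupledCharFun k (∑ l, b l • f l) t ∂gaussPi κ := by
  have hcos (Y : Fin k → ι → ℝ) : Real.exp (-(t ^ 2 * ∑ l, meanDeriv Y (f l) ^ 2) / 2) =
      ∫ b, Real.cos (t * ∑ l, b l * meanDeriv Y (f l)) ∂gaussPi κ := by
    have h := integral_cos_sum_gaussPi fun l => t * meanDeriv Y (f l)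
    simp only [mul_pow, ← Finset.mul_sum, mul_left_comm _ t] at h
    exact h.symm
  simp only [hcos, decoupledCharFun, map_sum, map_smul, smul_eq_mul]
  exact integral_integral_swap (integrable_cos_mul_sum_meanDeriv f t)

variable {f} {C s : ℝ} {d : ℕ}

lemma decoupledCharFun_sum_smul_le (hC : 0 ≤ C) (hs : 0 < s) (hs1 : s ≤ 1)
    (hdecay : ∀ b : κ → ℝ, ∑ l, b l ^ 2 = 1 → ∀ t, 1 ≤ t →
      decoupledCharFun k (∑ l, b l • f l) t * t ^ d ≤ C)
    {b : κ → ℝ} (hb : s ^ 2 ≤ ∑ l, b l ^ 2) :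
    decoupledCharFun k (∑ l, b l • f l) (s ^ 2)⁻¹ ≤ C * s ^ d := by
  set ρ := √(∑ l, b l ^ 2)
  have hsρ : s ≤ ρ := Real.le_sqrt_of_sq_le hb
  have hρ : 0 < ρ := hs.trans_le hsρ
  have hρsq : ρ ^ 2 = ∑ l, b l ^ 2 := Real.sq_sqrt (Finset.sum_nonneg fun _ _ => sq_nonneg _)
  have hsum : ∑ l, b l • f l = ρ • ∑ l, (b l / ρ) • f l := by
    simp only [Finset.smul_sum, smul_smul, mul_div_cancel₀ _ hρ.ne']
  have hunit : ∑ l, (b l / ρ) ^ 2 = 1 := by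
    simp only [div_pow, ← Finset.sum_div, ← hρsq, div_self (pow_pos hρ 2).ne']
  have hst : s⁻¹ ≤ (s ^ 2)⁻¹ * ρ := by
    rw [show s⁻¹ = (s ^ 2)⁻¹ * s by field_simp]
    gcongr
  have ht := hdecay _ hunit _ (((one_le_inv₀ hs).2 hs1).trans hst)
  rw [hsum, decoupledCharFun_smul]
  calc _ ≤ C / ((s ^ 2)⁻¹ * ρ) ^ d := (le_div_iff₀ (by positivity)).2 ht
    _ ≤ C / s⁻¹ ^ d := by gcongr
    _ = C * s ^ d := by rw [inv_pow, div_inv_eq_mul]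

lemma integral_exp_sum_meanDeriv_sq_le (hC : 0 ≤ C) (hs : 0 < s) (hs1 : s ≤ 1)
    (hdecay : ∀ b : κ → ℝ, ∑ l, b l ^ 2 = 1 → ∀ t, 1 ≤ t →
      decoupledCharFun k (∑ l, b l • f l) t * t ^ Fintype.card κ ≤ C) :
    ∫ Y : Fin k → ι → ℝ, Real.exp (-((s ^ 2)⁻¹ ^ 2 * ∑ l, meanDeriv Y (f l) ^ 2) / 2)
      ∂Measure.pi (fun _ => gaussPi ι) ≤ (1 + C) * s ^ Fintype.card κ := by
  set E : Set (κ → ℝ) := {b | ∑ l, b l ^ 2 < s ^ 2}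
  have hE : MeasurableSet E := measurableSet_lt (by fun_prop) measurable_const
  have hindicator : Integrable (E.indicator fun _ => (1 : ℝ)) (gaussPi κ) :=
    (integrable_const 1).indicator hE
  have hpointwise (b : κ → ℝ) : decoupledCharFun k (∑ l, b l • f l) (s ^ 2)⁻¹ ≤
      E.indicator (fun _ => (1 : ℝ)) b + C * s ^ Fintype.card κ := by
    by_cases hb : b ∈ E
    · rw [Set.indicator_of_mem hb]
      exact (decoupledCharFun_le_one _ _ _).trans (le_add_of_nonneg_right (by positivity))
    · rw [Set.indicator_of_notMem hb, zero_add]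
      exact decoupledCharFun_sum_smul_le hC hs hs1 hdecay (not_lt.1 hb)
  calc _ = ∫ b, decoupledCharFun k (∑ l, b l • f l) (s ^ 2)⁻¹ ∂gaussPi κ :=
        integral_exp_sum_meanDeriv_sq f _
    _ ≤ ∫ b, (E.indicator (fun _ => (1 : ℝ)) b + C * s ^ Fintype.card κ) ∂gaussPi κ :=
        integral_mono (integrable_decoupledCharFun_sum_smul f _)
          (hindicator.add (integrable_const _)) hpointwise
    _ = (gaussPi κ).real E + C * s ^ Fintype.card κ := by
        rw [integral_add hindicator (integrable_const _), integral_indicator hE]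
        simp
    _ ≤ s ^ Fintype.card κ + C * s ^ Fintype.card κ := by
        gcongr
        exact gaussPi_real_sum_sq_lt_le κ hs.le
    _ = _ := by ring

end Averaging

section DirectionWeight

variable {ι κ : Type} [Fintype ι] [Fintype κ]

/-- The Gaussian weight `exp (-(M / 2) * ∑ ⟪g_l, v⟫ ^ 2)` of the vector `v`, as seen along the
directions `g_l = x (l, ·)`. -/
noncomputable def directionWeight (M : ℝ) (x : κ × ι → ℝ) (v : ι → ℝ) : ℝ :=
  Real.exp (-(M * ∑ l, (∑ i, x (l, i) * v i) ^ 2) / 2)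

lemma directionWeight_pos (M : ℝ) (x : κ × ι → ℝ) (v : ι → ℝ) : 0 < directionWeight M x v :=
  Real.exp_pos _

variable {M : ℝ} (hM : 0 ≤ M)
include hM

lemma directionWeight_le_one (x : κ × ι → ℝ) (v : ι → ℝ) : directionWeight M x v ≤ 1 :=
  Real.exp_le_one_iff.2 <| by
    linarith [mul_nonneg hM (Finset.sum_nonneg fun l (_ : l ∈ Finset.univ) =>
      sq_nonneg (∑ i, x (l, i) * v i))]

lemma integrable_directionWeight {α : Type*} [TopologicalSpace α] [MeasurableSpace α]
    [OpensMeasurableSpace α] (μ : Measure α) [IsFiniteMeasure μ] {x : α → κ × ι → ℝ}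
    {v : α → ι → ℝ} (hx : Continuous x) (hv : Continuous v) :
    Integrable (fun a => directionWeight M (x a) (v a)) μ := by
  have hcont : Continuous fun a => directionWeight M (x a) (v a) := by
    unfold directionWeight
    fun_prop
  refine Integrable.of_bound hcont.aestronglyMeasurable 1 (ae_of_all _ fun a => ?_)
  rw [Real.norm_of_nonneg (directionWeight_pos M _ _).le]
  exact directionWeight_le_one hM _ _

-- Jensen's inequality for `exp`, since `𝔼[⟪g_l, v⟫ ^ 2] = |v| ^ 2`.
lemma exp_le_integral_directionWeight (v : ι → ℝ) :
    Real.exp (-(M * (Fintype.card κ * ∑ i, v i ^ 2)) / 2) ≤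
      ∫ x : κ × ι → ℝ, directionWeight M x v ∂gaussPi (κ × ι) := by
  classical
  set Q : MvPolynomial (κ × ι) ℝ :=
    C (-M / 2) * ∑ l, bilinPoly (Matrix.vecMulVec v v) l l
  have hQ (x : κ × ι → ℝ) : eval x Q = -(M * ∑ l, (∑ i, x (l, i) * v i) ^ 2) / 2 := by
    simp only [Q, map_mul, eval_C, map_sum, eval_bilinPoly, Matrix.vecMulVec_apply, sq,
      Finset.sum_mul_sum]
    simp only [mul_mul_mul_comm, mul_comm (v _ * v _)]
    ring
  have hexpect : expect Q = -(M * (Fintype.card κ * ∑ i, v i ^ 2)) / 2 := by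
    simp only [Q, expect_C_mul, map_sum, expect_bilinPoly, Matrix.trace_vecMulVec, if_true,
      Finset.sum_const, Finset.card_univ, nsmul_eq_mul, dotProduct, sq]
    ring
  simp only [directionWeight, ← hQ, ← hexpect, expect_apply]
  refine convexOn_exp.map_integral_le Real.continuous_exp.continuousOn isClosed_univ
    (ae_of_all _ fun _ => Set.mem_univ _) (integrable_eval Q) ?_
  simp only [hQ]
  exact integrable_directionWeight hM _ continuous_id continuous_const

lemma exp_le_setIntegral_directionWeight_add {S : Set (κ × ι → ℝ)} (hS : MeasurableSet S)
    (v : ι → ℝ) :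
    Real.exp (-(M * (Fintype.card κ * ∑ i, v i ^ 2)) / 2) ≤
      ∫ x in S, directionWeight M x v ∂gaussPi (κ × ι) + (gaussPi (κ × ι)).real Sᶜ := by
  have hint : Integrable (fun x : κ × ι → ℝ => directionWeight M x v) (gaussPi (κ × ι)) :=
    integrable_directionWeight hM _ continuous_id continuous_const
  refine (exp_le_integral_directionWeight hM v).trans ?_
  rw [← integral_add_compl hS hint]
  gcongr
  calc ∫ x in Sᶜ, directionWeight M x v ∂gaussPi (κ × ι)
      ≤ ∫ _ in Sᶜ, (1 : ℝ) ∂gaussPi (κ × ι) :=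
        integral_mono hint.integrableOn (integrable_const 1) fun x => directionWeight_le_one hM x v
    _ = (gaussPi (κ × ι)).real Sᶜ := by simp

lemma setIntegral_directionWeight_le_one (S : Set (κ × ι → ℝ)) (v : ι → ℝ) :
    ∫ x in S, directionWeight M x v ∂gaussPi (κ × ι) ≤ 1 :=
  calc ∫ x in S, directionWeight M x v ∂gaussPi (κ × ι) ≤ ∫ _ in S, (1 : ℝ) ∂gaussPi (κ × ι) :=
        integral_mono_of_nonneg (ae_of_all _ fun x => (directionWeight_pos M x v).le)
          (integrable_const 1) (ae_of_all _ fun x => directionWeight_le_one hM x v)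
    _ = (gaussPi (κ × ι)).real S := by simp
    _ ≤ 1 := measureReal_le_one

lemma exp_pow_le_two_pow_mul {S : Set (κ × ι → ℝ)} (hS : MeasurableSet S) {p : ℝ}
    (hSp : (gaussPi (κ × ι)).real Sᶜ ≤ p) {J : ℕ} (hJ : J ≠ 0) (v : ι → ℝ) :
    Real.exp (-(M * (Fintype.card κ * ∑ i, v i ^ 2)) / 2) ^ J ≤
      2 ^ J * (∫ x in S, directionWeight M x v ∂gaussPi (κ × ι) + p ^ J) := by
  set u := ∫ x in S, directionWeight M x v ∂gaussPi (κ × ι)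
  have hu : 0 ≤ u := integral_nonneg fun x => (directionWeight_pos M x v).le
  have hp : 0 ≤ p := measureReal_nonneg.trans hSp
  calc _ ≤ (u + p) ^ J := by
        gcongr
        exact (exp_le_setIntegral_directionWeight_add hM hS v).trans (by gcongr)
    _ ≤ 2 ^ (J - 1) * (u ^ J + p ^ J) := add_pow_le hu hp J
    _ ≤ 2 ^ J * (u + p ^ J) := by
        gcongr
        · norm_num
        · omega
        · exact pow_le_of_le_one hu (setIntegral_directionWeight_le_one hM S v) hJ

end DirectionWeight

section Step

variable {ι κ : Type} [Fintype ι] [Fintype κ] {m : ℕ} {F : MvPolynomial ι ℝ} {C : ℝ}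
  {S : Set (κ × ι → ℝ)}

/-- For all directions `g_l = x (l, ·)` in `S`, every unit combination of the derivatives
`∂_{g_l} F`, which lie in the chaos of degree `m`, has a decoupled characteristic function decaying
like `C t ^ (-d)`, where `d` is the number of directions. -/
def HasDecayOn (m : ℕ) (F : MvPolynomial ι ℝ) (C : ℝ) (S : Set (κ × ι → ℝ)) : Prop :=
  ∀ x ∈ S, ∀ b : κ → ℝ, ∑ l, b l ^ 2 = 1 → ∀ t, 1 ≤ t →
    decoupledCharFun m (∑ l, b l • dirDeriv (fun i => x (l, i)) F) t * t ^ Fintype.card κ ≤ C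

lemma integrable_directionWeight_meanDeriv {M : ℝ} (hM : 0 ≤ M) (m : ℕ) (F : MvPolynomial ι ℝ)
    (S : Set (κ × ι → ℝ)) :
    Integrable (fun z : (Fin m → ι → ℝ) × (κ × ι → ℝ) =>
        directionWeight M z.2 fun i => meanDeriv z.1 (pderiv i F))
      ((Measure.pi fun _ => gaussPi ι).prod ((gaussPi (κ × ι)).restrict S)) :=
  integrable_directionWeight hM _ continuous_snd (by fun_prop)

lemma integral_setIntegral_directionWeight_le (hC : 0 ≤ C) (hS : MeasurableSet S)
    (hdecay : HasDecayOn m F C S) {s : ℝ} (hs : 0 < s) (hs1 : s ≤ 1) :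
    ∫ Y : Fin m → ι → ℝ, ∫ x in S, directionWeight ((s ^ 2)⁻¹ ^ 2) x
      (fun i => meanDeriv Y (pderiv i F)) ∂gaussPi (κ × ι) ∂Measure.pi (fun _ => gaussPi ι) ≤
        (1 + C) * s ^ Fintype.card κ := by
  have hint := integrable_directionWeight_meanDeriv (sq_nonneg (s ^ 2)⁻¹) m F S
  have hbound (x : κ × ι → ℝ) (hx : x ∈ S) : ∫ Y : Fin m → ι → ℝ, directionWeight ((s ^ 2)⁻¹ ^ 2) x
      (fun i => meanDeriv Y (pderiv i F)) ∂Measure.pi (fun _ => gaussPi ι) ≤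
        (1 + C) * s ^ Fintype.card κ := by
    simpa only [directionWeight, meanDeriv_dirDeriv] using
      integral_exp_sum_meanDeriv_sq_le hC hs hs1 (hdecay x hx)
  rw [integral_integral_swap hint]
  calc _ ≤ ∫ _ in S, (1 + C) * s ^ Fintype.card κ ∂gaussPi (κ × ι) :=
        setIntegral_mono_on hint.integral_prod_right (integrable_const _) hS hbound
    _ = (gaussPi (κ × ι)).real S * ((1 + C) * s ^ Fintype.card κ) := by simp
    _ ≤ _ := mul_le_of_le_one_left (by positivity) measureReal_le_one

lemma decoupledCharFun_succ_le_two_pow_mul {M : ℝ} (hM : 0 ≤ M) (hS : MeasurableSet S) {p : ℝ}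
    (hSp : (gaussPi (κ × ι)).real Sᶜ ≤ p) {J : ℕ} (hJ : J ≠ 0)
    (hJM : J ≤ M * Fintype.card κ) (F : MvPolynomial ι ℝ) :
    decoupledCharFun (m + 1) F (M * Fintype.card κ) ≤
      2 ^ J * (∫ Y : Fin m → ι → ℝ, ∫ x in S, directionWeight M x
        (fun i => meanDeriv Y (pderiv i F)) ∂gaussPi (κ × ι) ∂Measure.pi (fun _ => gaussPi ι) +
          p ^ J) := by
  have hint := (integrable_directionWeight_meanDeriv hM m F S).integral_prod_left
  have hpointwise (Y : Fin m → ι → ℝ) :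
      Real.exp (-((M * Fintype.card κ) ^ 2 * ∑ i, meanDeriv Y (pderiv i F) ^ 2) / 2) ≤
        2 ^ J * (∫ x in S, directionWeight M x (fun i => meanDeriv Y (pderiv i F))
          ∂gaussPi (κ × ι) + p ^ J) := by
    refine le_trans ?_ (exp_pow_le_two_pow_mul hM hS hSp hJ _)
    rw [← Real.exp_nat_mul, Real.exp_le_exp]
    have hV : 0 ≤ ∑ i, meanDeriv Y (pderiv i F) ^ 2 := Finset.sum_nonneg fun _ _ => sq_nonneg _
    linarith [mul_le_mul_of_nonneg_right hJM (mul_nonneg (J.cast_nonneg.trans hJM) hV)]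
  rw [decoupledCharFun_succ]
  calc _ ≤ ∫ Y : Fin m → ι → ℝ, 2 ^ J * (∫ x in S, directionWeight M x
        (fun i => meanDeriv Y (pderiv i F)) ∂gaussPi (κ × ι) + p ^ J)
          ∂Measure.pi fun _ => gaussPi ι :=
        integral_mono_of_nonneg (ae_of_all _ fun _ => (Real.exp_pos _).le)
          ((hint.add (integrable_const _)).const_mul _) (ae_of_all _ hpointwise)
    _ = _ := by
        rw [integral_const_mul, integral_add hint (integrable_const _)]
        simp

lemma two_pow_mul_inv_pow_mul_pow_le {t : ℝ} (ht : 0 ≤ t) {J : ℕ} (htJ : t ≤ 2 ^ (J + 1))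
    (q : ℕ) : 2 ^ J * ((2 ^ (q + 1))⁻¹ : ℝ) ^ J * t ^ q ≤ 2 ^ q :=
  calc _ ≤ 2 ^ J * ((2 ^ (q + 1))⁻¹ : ℝ) ^ J * (2 ^ (J + 1)) ^ q := by gcongr
    _ = 2 ^ q := by
      rw [inv_pow, ← pow_mul, ← pow_mul]
      field_simp
      ring

-- With `s ^ 4 = d / t` and `M = s ^ (-4)` one has `M * d = t`; the power `J ≈ log₂ t` makes the
-- contribution `p ^ J` of the bad directions negligible.
lemma decoupledCharFun_succ_mul_pow_le {q : ℕ} (hq : Fintype.card κ = 4 * (q + 1)) (hC : 0 ≤ C)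
    (hS : MeasurableSet S) (hSp : (gaussPi (κ × ι)).real Sᶜ ≤ (2 ^ (q + 1))⁻¹)
    (hdecay : HasDecayOn m F C S) {t : ℝ} (ht : Fintype.card κ ≤ t) :
    decoupledCharFun (m + 1) F t * t ^ q ≤ (1 + C) * Fintype.card κ ^ (q + 1) + 2 ^ q := by
  have hd : (4 : ℝ) ≤ Fintype.card κ := by exact_mod_cast (by omega : 4 ≤ Fintype.card κ)
  have ht0 : 0 < t := by linarith
  obtain ⟨J, hJt, htJ⟩ := exists_nat_pow_near (x := t) (y := 2) (by linarith) one_lt_two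
  have hJ : J ≠ 0 := by
    rintro rfl
    norm_num at htJ
    linarith
  have hJle : (J : ℝ) ≤ t := le_trans (by exact_mod_cast J.lt_two_pow_self.le) hJt
  obtain ⟨s, hs, hs1, hs4⟩ : ∃ s : ℝ, 0 < s ∧ s ≤ 1 ∧ s ^ 4 = Fintype.card κ / t :=
    ⟨(Fintype.card κ / t) ^ (4⁻¹ : ℝ), by positivity,
      Real.rpow_le_one (by positivity) (div_le_one_of_le₀ ht ht0.le) (by norm_num),
      Real.rpow_inv_natCast_pow (n := 4) (by positivity) (by norm_num)⟩
  have hM : (s ^ 2)⁻¹ ^ 2 * Fintype.card κ = t := by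
    rw [inv_pow, ← pow_mul, hs4]
    field_simp
  have hle := decoupledCharFun_succ_le_two_pow_mul (m := m) (sq_nonneg (s ^ 2)⁻¹) hS hSp hJ
    (hM.symm ▸ hJle) F
  rw [hM] at hle
  have hint := integral_setIntegral_directionWeight_le hC hS hdecay hs hs1
  set u := ∫ Y : Fin m → ι → ℝ, ∫ x in S, directionWeight ((s ^ 2)⁻¹ ^ 2) x
    (fun i => meanDeriv Y (pderiv i F)) ∂gaussPi (κ × ι) ∂Measure.pi (fun _ => gaussPi ι)
  calc _ ≤ 2 ^ J * (u + (2 ^ (q + 1))⁻¹ ^ J) * t ^ q := by gcongr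
    _ = 2 ^ J * u * t ^ q + 2 ^ J * (2 ^ (q + 1))⁻¹ ^ J * t ^ q := by ring
    _ ≤ t * ((1 + C) * s ^ Fintype.card κ) * t ^ q + 2 ^ q := by
        gcongr
        · exact integral_nonneg fun Y => integral_nonneg fun x => (directionWeight_pos _ _ _).le
        · exact two_pow_mul_inv_pow_mul_pow_le ht0.le htJ.le q
    _ = _ := by
        rw [hq, pow_mul, hs4, hq, div_pow]
        field_simp
        ring

end Step

lemma pow_le_factorial_mul_exp {x : ℝ} (hx : 0 ≤ x) (n : ℕ) : x ^ n ≤ n.factorial * Real.exp x := by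
  have h := Real.pow_div_factorial_le_exp x hx n
  rwa [div_le_iff₀' (by positivity)] at h

lemma decoupledCharFun_one {ι : Type} [Fintype ι] {F : MvPolynomial ι ℝ}
    (hF : F ∈ hermiteSpace ι 1) (t : ℝ) :
    decoupledCharFun 1 F t = Real.exp (-(t ^ 2 * expect (F * F)) / 2) := by
  have hvar : ∑ i, expect (pderiv i F) ^ 2 = expect (F * F) := by
    have h := sum_expect_pderiv_mul_pderiv hF F
    rw [Nat.cast_one, one_mul] at h
    rw [← h]
    refine Finset.sum_congr rfl fun i _ => ?_
    obtain ⟨a, ha⟩ := exists_eq_C_of_mem_hermiteSpace_zero (pderiv_mem_hermiteSpace hF i)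
    rw [ha, ← C_mul, expect_C, expect_C, sq]
  simp [decoupledCharFun_succ, meanDeriv_zero, hvar]

lemma decoupledCharFun_one_mul_pow_le {ι : Type} [Fintype ι] {F : MvPolynomial ι ℝ}
    (hF : F ∈ hermiteSpace ι 1) {c : ℝ} (hc : 0 < c) (hcF : c ≤ expect (F * F)) (q : ℕ) {t : ℝ}
    (ht : 1 ≤ t) : decoupledCharFun 1 F t * t ^ q ≤ q.factorial * (2 / c) ^ q := by
  have hexp : c / 2 * t ≤ t ^ 2 * expect (F * F) / 2 := by
    have : t * c ≤ t ^ 2 * expect (F * F) := mul_le_mul (by nlinarith) hcF hc.le (by positivity)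
    linarith
  have htq : t ^ q ≤ (2 / c) ^ q * (q.factorial * Real.exp (c / 2 * t)) :=
    calc t ^ q = (2 / c) ^ q * (c / 2 * t) ^ q := by rw [← mul_pow]; field_simp
      _ ≤ _ := by gcongr; exact pow_le_factorial_mul_exp (by positivity) q
  rw [decoupledCharFun_one hF, neg_div, Real.exp_neg, inv_mul_le_iff₀ (Real.exp_pos _)]
  calc t ^ q ≤ (2 / c) ^ q * (q.factorial * Real.exp (t ^ 2 * expect (F * F) / 2)) :=
        htq.trans (by gcongr)
    _ = _ := by ring

theorem exists_decoupledCharFun_mul_pow_le (m q : ℕ) {c : ℝ} (hc : 0 < c) :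
    ∃ τ C : ℝ, 0 < τ ∧ 0 ≤ C ∧ ∀ (ι : Type) [Fintype ι] (F : MvPolynomial ι ℝ),
      F ∈ hermiteSpace ι (m + 1) → c ≤ expect (F * F) →
      (∀ r, 1 ≤ r → r < m + 1 → contractionNormSq r F F ≤ τ) →
      ∀ t, 1 ≤ t → decoupledCharFun (m + 1) F t * t ^ q ≤ C := by
  induction m generalizing q c with
  | zero =>
    exact ⟨1, q.factorial * (2 / c) ^ q, one_pos, by positivity, fun ι _ F hF hcF _ t ht =>
      decoupledCharFun_one_mul_pow_le hF hc hcF q ht⟩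
  | succ m ih =>
    obtain ⟨d, hd⟩ : ∃ d, d = 4 * (q + 1) := ⟨_, rfl⟩
    have hcard : Fintype.card (Fin d) = d := Fintype.card_fin d
    obtain ⟨τ', C, hτ', hC, hdecay⟩ := ih d (half_pos hc)
    obtain ⟨τ, hτ, hgood⟩ := exists_measurableSet_directions (κ := Fin d) (m := m + 1) (by omega)
      hc hτ' (p := (2 ^ (q + 1))⁻¹) (by positivity)
    refine ⟨τ, d ^ q + ((1 + C) * d ^ (q + 1) + 2 ^ q), hτ, by positivity,
      fun ι _ F hF hcF hcontr t ht => ?_⟩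
    obtain ⟨S, hS, hSp, hgoodS⟩ := hgood ι F hF hcF hcontr
    have hdecayS : HasDecayOn (m + 1) F C S := fun x hx b hb t ht => by
      obtain ⟨hvar, hcontr'⟩ := hgoodS x hx b hb
      rw [hcard]
      exact hdecay ι _ (Submodule.sum_mem _ fun l _ => Submodule.smul_mem _ _
        (dirDeriv_mem_hermiteSpace hF _)) hvar hcontr' t ht
    rcases le_total (d : ℝ) t with hdt | htd
    · have h := decoupledCharFun_succ_mul_pow_le (hcard.trans hd) hC hS hSp hdecayS
        (hcard.symm ▸ hdt)
      rw [hcard] at h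
      exact h.trans (le_add_of_nonneg_left (by positivity))
    · calc _ ≤ 1 * (d : ℝ) ^ q := by gcongr; exact decoupledCharFun_le_one _ F t
        _ ≤ _ := by rw [one_mul]; exact le_add_of_nonneg_right (by positivity)

/-! ### Decoupling -/

section AffineSubstitution

lemma exists_eq_C_add_sum_of_mem_derivKer_two {ι : Type*} [Fintype ι] {Q : MvPolynomial ι ℝ}
    (hQ : Q ∈ derivKer ι ℝ 2) :
    ∃ (c : ℝ) (a : ι → ℝ), Q = C c + ∑ i, C (a i) * X i ∧ ∀ i, pderiv i Q = C (a i) := by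
  classical
  have hpderiv (i : ι) : pderiv i Q = C (coeff 0 (pderiv i Q)) :=
    eq_C_of_mem_derivKer_one (mem_derivKer_succ.1 hQ i)
  have hconst : Q - ∑ j, C (coeff 0 (pderiv j Q)) * X j ∈ derivKer ι ℝ 1 := by
    refine mem_derivKer_succ.2 fun i => mem_derivKer_zero.2 ?_
    rw [map_sub, map_sum, sub_eq_zero]
    simpa [pderiv_C_mul, pderiv_X, Pi.single_apply] using hpderiv i
  exact ⟨_, _, sub_eq_iff_eq_add.1 (eq_C_of_mem_derivKer_one hconst), hpderiv⟩

variable {ι : Type} {ρ : ℝ}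

/-- The substitution `Q ↦ Q (ρ (x + u))`. -/
noncomputable def affineSubst (ρ : ℝ) (u : ι → ℝ) : MvPolynomial ι ℝ →ₐ[ℝ] MvPolynomial ι ℝ :=
  aeval fun i => C ρ * (X i + C (u i))

lemma affineSubst_X (u : ι → ℝ) (i : ι) : affineSubst ρ u (X i) = C ρ * (X i + C (u i)) :=
  aeval_X _ i

lemma affineSubst_C (u : ι → ℝ) (a : ℝ) : affineSubst ρ u (C a) = C a :=
  algHom_C _ a

lemma eval_affineSubst (u x : ι → ℝ) (Q : MvPolynomial ι ℝ) :
    eval x (affineSubst ρ u Q) = eval (ρ • (x + u)) Q := by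
  induction Q using MvPolynomial.induction_on with
  | C a => simp
  | add p q hp hq => simp [hp, hq]
  | mul_X p i hp => simp [hp, affineSubst_X, mul_add]

lemma pderiv_affineSubst (u : ι → ℝ) (i : ι) (Q : MvPolynomial ι ℝ) :
    pderiv i (affineSubst ρ u Q) = ρ • affineSubst ρ u (pderiv i Q) := by
  classical
  induction Q using MvPolynomial.induction_on with
  | C a => simp
  | add p q hp hq => simp [hp, hq]
  | mul_X p j hp =>
    have hX : pderiv i (affineSubst ρ u (X j)) = ρ • affineSubst ρ u (pderiv i (X j)) := by
      rw [affineSubst_X, pderiv_C_mul, map_add, pderiv_C, add_zero, pderiv_X, smul_eq_C_mul]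
      by_cases h : i = j <;> simp [h]
    simp only [map_mul, Derivation.leibniz, hp, hX, smul_eq_mul, map_add, smul_add, mul_smul_comm]

lemma affineSubst_sub_mem_derivKer {n : ℕ} {Q : MvPolynomial ι ℝ} (hQ : Q ∈ derivKer ι ℝ (n + 1))
    (u u' : ι → ℝ) : affineSubst ρ u Q - affineSubst ρ u' Q ∈ derivKer ι ℝ n := by
  induction n generalizing Q with
  | zero =>
    rw [eq_C_of_mem_derivKer_one hQ, affineSubst_C, affineSubst_C, sub_self]
    exact Submodule.zero_mem _
  | succ n ih =>
    refine mem_derivKer_succ.2 fun i => ?_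
    rw [map_sub, pderiv_affineSubst, pderiv_affineSubst, ← smul_sub]
    exact Submodule.smul_mem _ ρ (ih (mem_derivKer_succ.1 hQ i))

-- On polynomials of degree at most `k + 1`, a `k`-th derivative sees only the linear part of the
-- difference of two translates.
lemma meanDeriv_affineSubst_sub [Fintype ι] {k : ℕ} {Q : MvPolynomial ι ℝ}
    (hQ : Q ∈ derivKer ι ℝ (k + 2)) (Y : Fin k → ι → ℝ) (u u' : ι → ℝ) :
    meanDeriv Y (affineSubst ρ u Q - affineSubst ρ u' Q) =
      ρ ^ (k + 1) * ∑ j, (u j - u' j) * meanDeriv Y (pderiv j Q) := by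
  induction k generalizing Q with
  | zero =>
    obtain ⟨c, a, hQ, hpderiv⟩ := exists_eq_C_add_sum_of_mem_derivKer_two hQ
    have hdiff : affineSubst ρ u Q - affineSubst ρ u' Q = C (ρ * ∑ j, (u j - u' j) * a j) := by
      simp only [hQ, map_add, map_sum, map_mul, map_sub, affineSubst_C, affineSubst_X,
        add_sub_add_left_eq_sub, ← Finset.sum_sub_distrib, Finset.mul_sum]
      exact Finset.sum_congr rfl fun j _ => by ring
    simp only [hdiff, hpderiv, meanDeriv, expect_C, zero_add, pow_one]
  | succ k ih =>
    have hcons (F : MvPolynomial ι ℝ) :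
        meanDeriv Y F = ∑ i, Y 0 i * meanDeriv (Fin.tail Y) (pderiv i F) :=
      meanDeriv_dirDeriv _ _ _
    have hterm (i : ι) : meanDeriv (Fin.tail Y)
        (pderiv i (affineSubst ρ u Q - affineSubst ρ u' Q)) = ρ * (ρ ^ (k + 1) *
          ∑ j, (u j - u' j) * meanDeriv (Fin.tail Y) (pderiv i (pderiv j Q))) := by
      rw [map_sub, pderiv_affineSubst, pderiv_affineSubst, ← smul_sub, map_smul, smul_eq_mul,
        ih (mem_derivKer_succ.1 hQ i)]
      simp only [pderiv_pderiv_comm i]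
    simp only [hcons, hterm, Finset.mul_sum]
    rw [Finset.sum_comm]
    exact Finset.sum_congr rfl fun j _ => Finset.sum_congr rfl fun i _ => by ring

end AffineSubstitution

section GaussianPairs

variable {ι : Type} [Fintype ι]

lemma integral_cos_sum_sub_mul_gaussPi_prod (v : ι → ℝ) :
    ∫ z : (ι → ℝ) × (ι → ℝ), Real.cos (∑ i, (z.1 i - z.2 i) * v i)
      ∂(gaussPi ι).prod (gaussPi ι) = Real.exp (-∑ i, v i ^ 2) := by
  have hfactor (z : (ι → ℝ) × (ι → ℝ)) :
      Complex.exp ((∑ i, (z.1 i - z.2 i) * v i : ℝ) * Complex.I) =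
        Complex.exp ((∑ i, z.1 i * v i : ℝ) * Complex.I) *
          Complex.exp ((∑ i, z.2 i * -v i : ℝ) * Complex.I) := by
    rw [← Complex.exp_add, ← add_mul, ← Complex.ofReal_add, ← Finset.sum_add_distrib]
    simp only [sub_mul, mul_neg, ← sub_eq_add_neg]
  have hexp : ∫ z : (ι → ℝ) × (ι → ℝ), Complex.exp ((∑ i, (z.1 i - z.2 i) * v i : ℝ) * Complex.I)
      ∂(gaussPi ι).prod (gaussPi ι) = Real.exp (-∑ i, v i ^ 2) := by
    simp only [hfactor]
    rw [integral_prod_mul (fun x : ι → ℝ => Complex.exp ((∑ i, x i * v i : ℝ) * Complex.I))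
      (fun x : ι → ℝ => Complex.exp ((∑ i, x i * -v i : ℝ) * Complex.I)),
      integral_exp_sum_mul_I_gaussPi, integral_exp_sum_mul_I_gaussPi, ← Complex.ofReal_mul,
      ← Real.exp_add]
    simp only [neg_sq, neg_div, ← neg_add, add_halves]
  have hint : Integrable (fun z : (ι → ℝ) × (ι → ℝ) =>
      Complex.exp ((∑ i, (z.1 i - z.2 i) * v i : ℝ) * Complex.I))
      ((gaussPi ι).prod (gaussPi ι)) :=
    Integrable.of_bound (Continuous.aestronglyMeasurable (by fun_prop)) 1
      (ae_of_all _ fun z => (Complex.norm_exp_ofReal_mul_I _).le)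
  have hre := integral_re hint
  rw [hexp] at hre
  simpa only [RCLike.re_to_complex, Complex.exp_ofReal_mul_I_re, Complex.ofReal_re] using hre

lemma map_smul_add_gaussPi_prod {ρ : ℝ} (hρ : ρ ^ 2 = 1 / 2) :
    ((gaussPi ι).prod (gaussPi ι)).map (fun z => ρ • (z.1 + z.2)) = gaussPi ι := by
  have hone : ((gaussianReal 0 1).prod (gaussianReal 0 1)).map (fun p => ρ * (p.1 + p.2)) =
      gaussianReal 0 1 := by
    have hcomp : (fun p : ℝ × ℝ => ρ * (p.1 + p.2)) = (ρ * ·) ∘ fun p => p.1 + p.2 := rfl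
    rw [hcomp, ← Measure.map_map (by fun_prop) (by fun_prop), ← Measure.conv,
      gaussianReal_conv_gaussianReal, gaussianReal_map_const_mul]
    congr 1
    · simp
    · ext
      push_cast
      linarith
  have hpi := (measurePreserving_arrowProdEquivProdArrow ℝ ℝ ι (fun _ => gaussianReal 0 1)
    fun _ => gaussianReal 0 1).map_eq
  rw [gaussPi, ← hpi, Measure.map_map (by fun_prop) (by fun_prop)]
  have hmap := Measure.pi_map_pi (μ := fun _ : ι => (gaussianReal 0 1).prod (gaussianReal 0 1))
    (f := fun _ p => ρ * (p.1 + p.2)) fun _ => by fun_prop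
  simp only [hone] at hmap
  exact hmap

end GaussianPairs

section CauchySchwarz

lemma pow_integral_le_integral_pow {α : Type*} [MeasurableSpace α] {μ : Measure α}
    [IsProbabilityMeasure μ] {f : α → ℝ} (hf : AEStronglyMeasurable f μ) (h0 : ∀ x, 0 ≤ f x)
    (h1 : ∀ x, f x ≤ 1) (n : ℕ) : (∫ x, f x ∂μ) ^ n ≤ ∫ x, f x ^ n ∂μ := by
  have hint : Integrable f μ :=
    .of_bound hf 1 (ae_of_all _ fun x => by simpa [abs_of_nonneg (h0 x)] using h1 x)
  have hint_pow : Integrable (fun x => f x ^ n) μ :=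
    .of_bound (hf.pow n) 1 (ae_of_all _ fun x => by
      simpa [abs_of_nonneg (h0 x)] using pow_le_one₀ (h0 x) (h1 x))
  exact (convexOn_pow n).map_integral_le (continuous_pow n).continuousOn isClosed_Ici
    (ae_of_all _ h0) hint hint_pow

open scoped ComplexConjugate

variable {α β : Type*} [MeasurableSpace α] [MeasurableSpace β]

lemma ofReal_norm_integral_sq {ν : Measure β} [SFinite ν] (g : β → ℂ) :
    ((‖∫ u, g u ∂ν‖ ^ 2 : ℝ) : ℂ) = ∫ z, g z.1 * conj (g z.2) ∂ν.prod ν := by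
  rw [integral_prod_mul g fun u => conj (g u), integral_conj, Complex.mul_conj,
    Complex.normSq_eq_norm_sq]

lemma norm_integral_integral_sq_le {μ : Measure α} {ν : Measure β} [IsProbabilityMeasure μ]
    [IsProbabilityMeasure ν] {h : α → β → ℂ} (hm : StronglyMeasurable (Function.uncurry h))
    (h1 : ∀ v u, ‖h v u‖ ≤ 1) :
    ‖∫ v, ∫ u, h v u ∂ν ∂μ‖ ^ 2 ≤ ∫ z, ‖∫ v, h v z.1 * conj (h v z.2) ∂μ‖ ∂ν.prod ν := by
  have hinner (v : α) : ‖∫ u, h v u ∂ν‖ ≤ 1 := by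
    simpa using norm_integral_le_of_norm_le_const (μ := ν) (ae_of_all _ fun u => h1 v u)
  have hint : Integrable (Function.uncurry fun v (z : β × β) => h v z.1 * conj (h v z.2))
      (μ.prod (ν.prod ν)) := by
    refine .of_bound (StronglyMeasurable.aestronglyMeasurable ?_) 1 (ae_of_all _ fun a => ?_)
    · exact (hm.comp_measurable (g := fun a : α × β × β => (a.1, a.2.1)) (by fun_prop)).mul
        (Complex.continuous_conj.comp_stronglyMeasurable
          (hm.comp_measurable (g := fun a : α × β × β => (a.1, a.2.2)) (by fun_prop)))
    · simpa [Function.uncurry] using mul_le_one₀ (h1 a.1 a.2.1) (norm_nonneg _) (h1 a.1 a.2.2)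
  calc ‖∫ v, ∫ u, h v u ∂ν ∂μ‖ ^ 2 ≤ (∫ v, ‖∫ u, h v u ∂ν‖ ∂μ) ^ 2 := by
        gcongr
        exact norm_integral_le_integral_norm _
    _ ≤ ∫ v, ‖∫ u, h v u ∂ν‖ ^ 2 ∂μ :=
        pow_integral_le_integral_pow hm.integral_prod_right.norm.aestronglyMeasurable
          (fun _ => norm_nonneg _) hinner 2
    _ ≤ ‖((∫ v, ‖∫ u, h v u ∂ν‖ ^ 2 ∂μ : ℝ) : ℂ)‖ := by
        rw [Complex.norm_real]
        exact le_abs_self _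
    _ = ‖∫ z, ∫ v, h v z.1 * conj (h v z.2) ∂μ ∂ν.prod ν‖ := by
        rw [← integral_complex_ofReal, ← integral_integral_swap hint]
        simp only [ofReal_norm_integral_sq]
    _ ≤ ∫ z, ‖∫ v, h v z.1 * conj (h v z.2) ∂μ‖ ∂ν.prod ν := norm_integral_le_integral_norm _

end CauchySchwarz

section Decoupling

open scoped ComplexConjugate

variable {ι : Type} {ρ : ℝ}

lemma continuous_exp_eval_mul_I (Q : MvPolynomial ι ℝ) :
    Continuous fun x => Complex.exp ((eval x Q : ℝ) * Complex.I) := by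
  have := continuous_eval Q
  fun_prop

variable [Fintype ι]

/-- The mean `𝔼[exp (i Q)]`, that is, the characteristic function of `Q` at `1`. -/
noncomputable def meanExpI (Q : MvPolynomial ι ℝ) : ℂ :=
  ∫ x, Complex.exp ((eval x Q : ℝ) * Complex.I) ∂gaussPi ι

lemma norm_meanExpI_le_one (Q : MvPolynomial ι ℝ) : ‖meanExpI Q‖ ≤ 1 := by
  simpa [meanExpI] using norm_integral_le_of_norm_le_const (μ := gaussPi ι)
    (ae_of_all _ fun x => (Complex.norm_exp_ofReal_mul_I (eval x Q)).le)

lemma meanExpI_affineSubst_sub (u u' : ι → ℝ) (Q : MvPolynomial ι ℝ) :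
    meanExpI (affineSubst ρ u Q - affineSubst ρ u' Q) =
      ∫ v, Complex.exp ((eval (ρ • (v + u)) Q : ℝ) * Complex.I) *
        conj (Complex.exp ((eval (ρ • (v + u')) Q : ℝ) * Complex.I)) ∂gaussPi ι := by
  simp only [meanExpI, map_sub, eval_affineSubst, ← Complex.exp_conj, map_mul,
    Complex.conj_ofReal, Complex.conj_I, ← Complex.exp_add]
  congr! 3
  push_cast
  ring

lemma stronglyMeasurable_norm_meanExpI_affineSubst_sub (Q : MvPolynomial ι ℝ) :
    StronglyMeasurable fun z : (ι → ℝ) × (ι → ℝ) =>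
      ‖meanExpI (affineSubst ρ z.1 Q - affineSubst ρ z.2 Q)‖ := by
  have hexp := continuous_exp_eval_mul_I Q
  simp only [meanExpI_affineSubst_sub]
  have h1 : Continuous fun a : (ι → ℝ) × ((ι → ℝ) × (ι → ℝ)) => ρ • (a.1 + a.2.1) := by fun_prop
  have h2 : Continuous fun a : (ι → ℝ) × ((ι → ℝ) × (ι → ℝ)) => ρ • (a.1 + a.2.2) := by fun_prop
  exact (((hexp.comp h1).mul
    (Complex.continuous_conj.comp (hexp.comp h2))).stronglyMeasurable.integral_prod_left').norm

lemma norm_meanExpI_sq_le (hρ : ρ ^ 2 = 1 / 2) (Q : MvPolynomial ι ℝ) :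
    ‖meanExpI Q‖ ^ 2 ≤ ∫ z : (ι → ℝ) × (ι → ℝ),
      ‖meanExpI (affineSubst ρ z.1 Q - affineSubst ρ z.2 Q)‖ ∂(gaussPi ι).prod (gaussPi ι) := by
  have hexp := continuous_exp_eval_mul_I Q
  have hm : StronglyMeasurable (Function.uncurry fun v u : ι → ℝ =>
      Complex.exp ((eval (ρ • (v + u)) Q : ℝ) * Complex.I)) :=
    (hexp.comp (g := fun x => Complex.exp ((eval x Q : ℝ) * Complex.I))
      (f := fun z : (ι → ℝ) × (ι → ℝ) => ρ • (z.1 + z.2)) (by fun_prop)).stronglyMeasurable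
  have hn (v u : ι → ℝ) : ‖Complex.exp ((eval (ρ • (v + u)) Q : ℝ) * Complex.I)‖ ≤ 1 :=
    (Complex.norm_exp_ofReal_mul_I _).le
  have hrot : meanExpI Q = ∫ v, ∫ u, Complex.exp ((eval (ρ • (v + u)) Q : ℝ) * Complex.I)
      ∂gaussPi ι ∂gaussPi ι := by
    rw [meanExpI, ← map_smul_add_gaussPi_prod hρ, integral_map (by fun_prop)
      hexp.aestronglyMeasurable, map_smul_add_gaussPi_prod hρ]
    exact integral_prod _ (.of_bound hm.aestronglyMeasurable 1 (ae_of_all _ fun z => hn z.1 z.2))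
  simp only [meanExpI_affineSubst_sub, hrot]
  exact norm_integral_integral_sq_le hm hn

lemma norm_meanExpI_of_mem_derivKer_two {Q : MvPolynomial ι ℝ} (hQ : Q ∈ derivKer ι ℝ 2) :
    ‖meanExpI Q‖ = decoupledCharFun 1 Q 1 := by
  obtain ⟨c, a, hQ, hpderiv⟩ := exists_eq_C_add_sum_of_mem_derivKer_two hQ
  have hexp (x : ι → ℝ) : Complex.exp ((eval x Q : ℝ) * Complex.I) =
      Complex.exp (c * Complex.I) * Complex.exp ((∑ i, x i * a i : ℝ) * Complex.I) := by
    rw [← Complex.exp_add, ← add_mul, ← Complex.ofReal_add, hQ]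
    simp [mul_comm]
  have hnorm : ‖meanExpI Q‖ = Real.exp (-(∑ i, a i ^ 2) / 2) := by
    simp only [meanExpI, hexp]
    rw [integral_const_mul, integral_exp_sum_mul_I_gaussPi, norm_mul,
      Complex.norm_exp_ofReal_mul_I, one_mul, Complex.norm_real, Real.norm_eq_abs, Real.abs_exp]
  rw [hnorm, decoupledCharFun_succ]
  simp [hpderiv, meanDeriv]

lemma integral_decoupledCharFun_affineSubst_sub (hρ : ρ ^ 2 = 1 / 2) {k : ℕ}
    {Q : MvPolynomial ι ℝ} (hQ : Q ∈ derivKer ι ℝ (k + 2)) (t : ℝ) :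
    Integrable (fun z : (ι → ℝ) × (ι → ℝ) =>
        decoupledCharFun k (affineSubst ρ z.1 Q - affineSubst ρ z.2 Q) t)
        ((gaussPi ι).prod (gaussPi ι)) ∧
      ∫ z : (ι → ℝ) × (ι → ℝ), decoupledCharFun k (affineSubst ρ z.1 Q - affineSubst ρ z.2 Q) t
        ∂(gaussPi ι).prod (gaussPi ι) = decoupledCharFun (k + 1) Q (t * ρ ^ k) := by
  have hint : Integrable (Function.uncurry fun (z : (ι → ℝ) × (ι → ℝ)) (Y : Fin k → ι → ℝ) =>
      Real.cos (∑ j, (z.1 j - z.2 j) * (t * ρ ^ (k + 1) * meanDeriv Y (pderiv j Q))))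
      (((gaussPi ι).prod (gaussPi ι)).prod (Measure.pi fun _ => gaussPi ι)) :=
    integrable_cos (Continuous.aestronglyMeasurable (by fun_prop))
  have hcos (z : (ι → ℝ) × (ι → ℝ)) :
      decoupledCharFun k (affineSubst ρ z.1 Q - affineSubst ρ z.2 Q) t =
        ∫ Y : Fin k → ι → ℝ,
          Real.cos (∑ j, (z.1 j - z.2 j) * (t * ρ ^ (k + 1) * meanDeriv Y (pderiv j Q)))
          ∂Measure.pi fun _ => gaussPi ι := by
    simp only [decoupledCharFun, meanDeriv_affineSubst_sub hQ, Finset.mul_sum]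
    congr! 4
    ring
  have hsum (Y : Fin k → ι → ℝ) : -∑ j, (t * ρ ^ (k + 1) * meanDeriv Y (pderiv j Q)) ^ 2 =
      -((t * ρ ^ k) ^ 2 * ∑ j, meanDeriv Y (pderiv j Q) ^ 2) / 2 := by
    have hpow : (t * ρ ^ (k + 1)) ^ 2 = (t * ρ ^ k) ^ 2 / 2 := by
      linear_combination (t * ρ ^ k) ^ 2 * hρ
    simp only [mul_pow _ (meanDeriv _ _), ← Finset.mul_sum, hpow]
    ring
  simp only [hcos]
  refine ⟨hint.integral_prod_left, ?_⟩
  rw [integral_integral_swap hint, decoupledCharFun_succ]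
  simp only [integral_cos_sum_sub_mul_gaussPi_prod, hsum]

-- Each Cauchy–Schwarz step replaces `Q` by a difference of two independent translates, which
-- lowers its degree by one; after `d` steps only the linear case is left.
theorem exists_norm_meanExpI_pow_le (d : ℕ) : ∃ κ : ℝ, 0 < κ ∧
    ∀ (ι : Type) [Fintype ι] (Q : MvPolynomial ι ℝ), Q ∈ derivKer ι ℝ (d + 2) →
      ‖meanExpI Q‖ ^ 2 ^ d ≤ decoupledCharFun (d + 1) Q κ := by
  induction d with
  | zero =>
    exact ⟨1, one_pos, fun ι _ Q hQ => by simpa using (norm_meanExpI_of_mem_derivKer_two hQ).le⟩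
  | succ d ih =>
    obtain ⟨κ, hκ, hle⟩ := ih
    have hρ : √(1 / 2 : ℝ) ^ 2 = 1 / 2 := Real.sq_sqrt (by norm_num)
    set ρ := √(1 / 2 : ℝ)
    have hρ_pos : 0 < ρ := Real.sqrt_pos.2 (by norm_num)
    refine ⟨κ * ρ ^ (d + 1), mul_pos hκ (pow_pos hρ_pos _), fun ι _ Q hQ => ?_⟩
    obtain ⟨hint, hintegral⟩ := integral_decoupledCharFun_affineSubst_sub hρ hQ κ
    set γ₂ := (gaussPi ι).prod (gaussPi ι)
    let D (z : (ι → ℝ) × (ι → ℝ)) := affineSubst ρ z.1 Q - affineSubst ρ z.2 Q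
    calc ‖meanExpI Q‖ ^ 2 ^ (d + 1) = (‖meanExpI Q‖ ^ 2) ^ 2 ^ d := by rw [← pow_mul, pow_succ']
      _ ≤ (∫ z, ‖meanExpI (D z)‖ ∂γ₂) ^ 2 ^ d := by
          gcongr
          exact norm_meanExpI_sq_le hρ Q
      _ ≤ ∫ z, ‖meanExpI (D z)‖ ^ 2 ^ d ∂γ₂ :=
          pow_integral_le_integral_pow
            (stronglyMeasurable_norm_meanExpI_affineSubst_sub Q).aestronglyMeasurable
            (fun _ => norm_nonneg _) (fun _ => norm_meanExpI_le_one _) _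
      _ ≤ ∫ z, decoupledCharFun (d + 1) (D z) κ ∂γ₂ :=
          integral_mono_of_nonneg (ae_of_all _ fun z => by positivity) hint
            (ae_of_all _ fun z => hle ι (D z) (affineSubst_sub_mem_derivKer hQ z.1 z.2))
      _ = decoupledCharFun (d + 2) Q (κ * ρ ^ (d + 1)) := hintegral

end Decoupling

/-! ### Fourier inversion -/

section FourierInversion

open scoped FourierTransform ComplexOrder RealInnerProductSpace

variable {V : Type*} [NormedAddCommGroup V] [InnerProductSpace ℝ V] [MeasurableSpace V]

/-- The characteristic function in the normalization of Mathlib's Fourier transform: it is `𝓕⁻ ν`,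
where the characters are `x ↦ exp (2πi⟪x, t⟫)`. -/
noncomputable def measureFourierInv (ν : Measure V) (t : V) : ℂ :=
  charFun ν ((2 * Real.pi) • t)

lemma norm_measureFourierInv_le_one (ν : Measure V) [IsProbabilityMeasure ν] (t : V) :
    ‖measureFourierInv ν t‖ ≤ 1 :=
  norm_charFun_le_one _

lemma measureFourierInv_eq_integral (ν : Measure V) (t : V) :
    measureFourierInv ν t = ∫ x, (Real.fourierChar ⟪x, t⟫ : ℂ) ∂ν := by
  simp [measureFourierInv, charFun_apply, Real.fourierChar_apply, inner_smul_right]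

variable [BorelSpace V] [FiniteDimensional ℝ V]

/-- The density that Fourier inversion attributes to `ν`. -/
noncomputable def fourierDensity (ν : Measure V) (x : V) : ℝ :=
  (𝓕 (measureFourierInv ν) x).re

lemma continuous_fourierDensity {ν : Measure V} (hν : Integrable (measureFourierInv ν)) :
    Continuous (fourierDensity ν) :=
  Complex.continuous_re.comp <| VectorFourier.fourierIntegral_continuous
    Real.continuous_fourierChar continuous_inner hν

lemma integrable_cexp_neg_mul_sq_norm {b : ℝ} (hb : 0 < b) :
    Integrable fun v : V => Complex.exp (-b * ‖v‖ ^ 2) := by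
  simpa using GaussianFourier.integrable_cexp_neg_mul_sq_norm_add (V := V) (b := b) (by simpa) 0 0

lemma integrable_fourierDensity_mul_exp {ν : Measure V} (hν : Integrable (measureFourierInv ν))
    {b : ℝ} (hb : 0 < b) : Integrable fun x => fourierDensity ν x * Real.exp (-b * ‖x‖ ^ 2) := by
  have hexp : Integrable fun x : V => Real.exp (-b * ‖x‖ ^ 2) := by
    refine (integrable_cexp_neg_mul_sq_norm hb).re.congr (ae_of_all _ fun x => ?_)
    exact mod_cast Complex.exp_ofReal_re (-b * ‖x‖ ^ 2)
  refine hexp.bdd_mul (continuous_fourierDensity hν).aestronglyMeasurable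
    (c := ∫ t, ‖measureFourierInv ν t‖) (ae_of_all _ fun x => ?_)
  exact (Complex.abs_re_le_norm _).trans
    (VectorFourier.norm_fourierIntegral_le_integral_norm _ _ _ _ _)

variable (ν : Measure V) [IsProbabilityMeasure ν]

lemma continuous_measureFourierInv : Continuous (measureFourierInv ν) :=
  continuous_charFun.comp (by fun_prop)

lemma integral_measureFourierInv_mul {h : V → ℂ} (hh : Integrable h) :
    ∫ t, measureFourierInv ν t * h t = ∫ x, 𝓕⁻ h x ∂ν := by
  have hone : Integrable (1 : V → ℂ) ν := integrable_const 1
  have := VectorFourier.integral_fourierIntegral_smul_eq_flip (L := -innerₗ V)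
    Real.continuous_fourierChar continuous_inner.neg hone hh
  simpa [VectorFourier.fourierIntegral, measureFourierInv_eq_integral, Real.fourierInv_eq,
    Circle.smul_def, real_inner_comm] using this

variable {ν}

lemma integral_fourier_measureFourierInv_mul (hν : Integrable (measureFourierInv ν)) {h : V → ℂ}
    (hcont : Continuous h) (hh : Integrable h) (hfourier : Integrable (𝓕 h)) :
    ∫ x, 𝓕 (measureFourierInv ν) x * h x = ∫ x, h x ∂ν := by
  have := VectorFourier.integral_fourierIntegral_smul_eq_flip (μ := (volume : Measure V))
    (ν := volume) (L := innerₗ V) Real.continuous_fourierChar continuous_inner hν hh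
  rw [flip_innerₗ] at this
  refine this.trans ?_
  simp only [smul_eq_mul]
  change ∫ t, measureFourierInv ν t * 𝓕 h t = _
  rw [integral_measureFourierInv_mul ν hfourier, hcont.fourierInv_fourier_eq hh hfourier]

-- Damping the inversion integral by a Gaussian turns it into the integral of a (positive) Gaussian
-- kernel against `ν`.
lemma fourier_measureFourierInv_nonneg (hν : Integrable (measureFourierInv ν)) (x : V) :
    0 ≤ 𝓕 (measureFourierInv ν) x := by
  have hint := (Real.fourierIntegral_convergent_iff x).2 hν
  rw [Real.fourier_eq]
  refine ge_of_tendsto (Real.tendsto_integral_cexp_sq_smul hint) ?_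
  filter_upwards [eventually_gt_atTop 0] with c hc
  have hgauss := GaussianFourier.integrable_cexp_neg_mul_sq_norm_add (V := V) (b := (c⁻¹ : ℝ))
    (by simpa) (2 * Real.pi * Complex.I) (-x)
  have hmul (t : V) : Complex.exp (-(c⁻¹ : ℝ) * ‖t‖ ^ 2) •
      Real.fourierChar (-⟪t, x⟫) • measureFourierInv ν t = measureFourierInv ν t *
        Complex.exp (-(c⁻¹ : ℝ) * ‖t‖ ^ 2 + 2 * Real.pi * Complex.I * ⟪-x, t⟫) := by
    rw [Complex.exp_add, Circle.smul_def, Real.fourierChar_apply, inner_neg_left, real_inner_comm]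
    simp only [smul_eq_mul]
    push_cast
    ring_nf
  have hkernel (y : V) :
      𝓕⁻ (fun t : V => Complex.exp (-(c⁻¹ : ℝ) * ‖t‖ ^ 2 + 2 * Real.pi * Complex.I * ⟪-x, t⟫)) y =
        ((Real.pi / c⁻¹) ^ (Module.finrank ℝ V / 2 : ℝ) *
          Real.exp (-Real.pi ^ 2 * ‖-x - -y‖ ^ 2 / c⁻¹) : ℝ) := by
    rw [Real.fourierInv_eq_fourier_neg, fourier_gaussian_innerProductSpace' (by simpa)]
    push_cast [Complex.ofReal_cpow (by positivity : 0 ≤ Real.pi / c⁻¹)]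
    rfl
  simp only [hmul]
  rw [integral_measureFourierInv_mul ν hgauss]
  simp only [hkernel]
  rw [integral_complex_ofReal, Complex.zero_le_real]
  exact integral_nonneg fun y => by positivity

lemma ofReal_fourierDensity (hν : Integrable (measureFourierInv ν)) (x : V) :
    (fourierDensity ν x : ℂ) = 𝓕 (measureFourierInv ν) x :=
  (Complex.eq_re_of_ofReal_le (fourier_measureFourierInv_nonneg hν x)).symm

lemma fourierDensity_nonneg (hν : Integrable (measureFourierInv ν)) (x : V) :
    0 ≤ fourierDensity ν x :=
  (Complex.nonneg_iff.1 (fourier_measureFourierInv_nonneg hν x)).1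

lemma integral_fourierDensity_mul_exp (hν : Integrable (measureFourierInv ν)) {b : ℝ}
    (hb : 0 < b) :
    ∫ x, fourierDensity ν x * Real.exp (-b * ‖x‖ ^ 2) = ∫ x, Real.exp (-b * ‖x‖ ^ 2) ∂ν := by
  have hfourier : Integrable (𝓕 fun v : V => Complex.exp (-b * ‖v‖ ^ 2)) := by
    simp only [funext (fourier_gaussian_innerProductSpace (V := V) (b := b) (by simpa))]
    convert (integrable_cexp_neg_mul_sq_norm (V := V) (b := Real.pi ^ 2 / b)
      (by positivity)).const_mul _ using 4
    push_cast
    ring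
  have := integral_fourier_measureFourierInv_mul hν (by fun_prop)
    (integrable_cexp_neg_mul_sq_norm hb) hfourier
  apply Complex.ofReal_injective
  rw [← integral_complex_ofReal, ← integral_complex_ofReal]
  simpa [ofReal_fourierDensity hν] using this

lemma lintegral_fourierDensity_mul_exp_le_one (hν : Integrable (measureFourierInv ν)) {b : ℝ}
    (hb : 0 < b) :
    ∫⁻ x, ENNReal.ofReal (fourierDensity ν x * Real.exp (-b * ‖x‖ ^ 2)) ≤ 1 := by
  rw [← ofReal_integral_eq_lintegral_ofReal (integrable_fourierDensity_mul_exp hν hb)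
    (ae_of_all _ fun x => mul_nonneg (fourierDensity_nonneg hν x) (Real.exp_nonneg _)),
    integral_fourierDensity_mul_exp hν hb, ENNReal.ofReal_le_one]
  calc ∫ x, Real.exp (-b * ‖x‖ ^ 2) ∂ν ≤ ∫ _, 1 ∂ν := by
        refine integral_mono_of_nonneg (ae_of_all _ fun x => by positivity)
          (integrable_const 1) (ae_of_all _ fun x => Real.exp_le_one_iff.2 ?_)
        rw [neg_mul, neg_nonpos]
        positivity
    _ = 1 := by simp

lemma integrable_fourierDensity (hν : Integrable (measureFourierInv ν)) :
    Integrable (fourierDensity ν) := by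
  have hcont := continuous_fourierDensity hν
  have hlim (x : V) : Tendsto (fun n : ℕ => ENNReal.ofReal
      (fourierDensity ν x * Real.exp (-(1 / ((n : ℝ) + 1)) * ‖x‖ ^ 2))) atTop
      (𝓝 (ENNReal.ofReal (fourierDensity ν x))) := by
    have h := ((tendsto_one_div_add_atTop_nhds_zero_nat (𝕜 := ℝ)).neg.mul_const (‖x‖ ^ 2)).rexp
    simpa using ENNReal.tendsto_ofReal (h.const_mul (fourierDensity ν x))
  refine ⟨hcont.aestronglyMeasurable, ?_⟩
  rw [hasFiniteIntegral_iff_ofReal (ae_of_all _ (fourierDensity_nonneg hν))]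
  calc ∫⁻ x, ENNReal.ofReal (fourierDensity ν x)
      ≤ liminf (fun n : ℕ => ∫⁻ x, ENNReal.ofReal
          (fourierDensity ν x * Real.exp (-(1 / ((n : ℝ) + 1)) * ‖x‖ ^ 2))) atTop := by
        simp only [← (hlim _).liminf_eq]
        exact lintegral_liminf_le fun n => by fun_prop
    _ ≤ 1 := liminf_le_of_le (by isBoundedDefault) fun a ha => by
        obtain ⟨n, hn⟩ := ha.exists
        exact hn.trans (lintegral_fourierDensity_mul_exp_le_one hν (by positivity))
    _ < ⊤ := ENNReal.one_lt_top

theorem eq_withDensity_fourierDensity (hν : Integrable (measureFourierInv ν)) :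
    ν = volume.withDensity fun x => ENNReal.ofReal (fourierDensity ν x) := by
  have hint := integrable_fourierDensity hν
  have hnonneg := fourierDensity_nonneg hν
  set μ := volume.withDensity fun x => ENNReal.ofReal (fourierDensity ν x) with hμ
  have : IsFiniteMeasure μ := isFiniteMeasure_withDensity_ofReal hint.2
  have heq (t : V) : measureFourierInv ν t = measureFourierInv μ t := by
    rw [← (continuous_measureFourierInv ν).fourierInv_fourier_eq hν (by
      simpa [ofReal_fourierDensity hν] using hint.ofReal (𝕜 := ℂ)), Real.fourierInv_eq,
      measureFourierInv_eq_integral, hμ, integral_withDensity_eq_integral_toReal_smul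
      (continuous_fourierDensity hν).measurable.ennreal_ofReal
      (ae_of_all _ fun _ => ENNReal.ofReal_lt_top)]
    refine integral_congr_ae (ae_of_all _ fun x => ?_)
    beta_reduce
    rw [ENNReal.toReal_ofReal (hnonneg x), ← ofReal_fourierDensity hν, Circle.smul_def,
      Complex.real_smul, smul_eq_mul, mul_comm]
  refine Measure.ext_of_charFun (funext fun t => ?_)
  have := heq ((2 * Real.pi)⁻¹ • t)
  simpa only [measureFourierInv, smul_inv_smul₀ Real.two_pi_pos.ne'] using this

end FourierInversion

/-! ### Convergence of densities -/

section FourierDecay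

open scoped FourierTransform

/-- Polynomial decay of order `s` of the characteristic function of `ν`, with constant `C`. -/
def FourierDecay (s : ℕ) (C : ℝ) (ν : Measure ℝ) : Prop :=
  ∀ t, (1 + |t|) ^ s * ‖measureFourierInv ν t‖ ≤ C

variable {q : ℕ} {C C' : ℝ} {ν μ : Measure ℝ}

lemma FourierDecay.abs_pow_mul_norm_le (h : FourierDecay (q + 2) C ν) {j : ℕ} (hj : j ≤ q)
    (t : ℝ) : |t| ^ j * ‖measureFourierInv ν t‖ ≤ C * (1 + t ^ 2)⁻¹ := by
  have hpow : |t| ^ j ≤ (1 + |t|) ^ q := by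
    calc |t| ^ j ≤ (1 + |t|) ^ j := by gcongr; linarith
      _ ≤ (1 + |t|) ^ q := by gcongr; linarith [abs_nonneg t]
  have hsq : 1 + t ^ 2 ≤ (1 + |t|) ^ 2 := by nlinarith [abs_nonneg t, sq_abs t]
  rw [← div_eq_mul_inv, le_div_iff₀ (by positivity)]
  calc |t| ^ j * ‖measureFourierInv ν t‖ * (1 + t ^ 2)
      = |t| ^ j * (1 + t ^ 2) * ‖measureFourierInv ν t‖ := by ring
    _ ≤ (1 + |t|) ^ q * (1 + |t|) ^ 2 * ‖measureFourierInv ν t‖ := by gcongr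
    _ = (1 + |t|) ^ (q + 2) * ‖measureFourierInv ν t‖ := by rw [pow_add]
    _ ≤ C := h t

lemma norm_fourier_sub_le {f g : ℝ → ℂ} (hf : Integrable f) (hg : Integrable g) (x : ℝ) :
    ‖𝓕 f x - 𝓕 g x‖ ≤ ∫ t, ‖f t - g t‖ := by
  rw [Real.fourier_eq, Real.fourier_eq,
    ← integral_sub ((Real.fourierIntegral_convergent_iff x).2 hf)
      ((Real.fourierIntegral_convergent_iff x).2 hg)]
  refine (norm_integral_le_integral_norm _).trans_eq ?_
  simp only [← smul_sub, Circle.norm_smul]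

variable [IsProbabilityMeasure ν] [IsProbabilityMeasure μ]

lemma FourierDecay.integrable_pow_smul (h : FourierDecay (q + 2) C ν) {j : ℕ} (hj : j ≤ q) :
    Integrable fun t : ℝ => t ^ j • measureFourierInv ν t := by
  have hcont := continuous_measureFourierInv ν
  refine (integrable_inv_one_add_sq.const_mul C).mono'
    (Continuous.aestronglyMeasurable (by fun_prop)) (ae_of_all _ fun t => ?_)
  rw [norm_smul, norm_pow, Real.norm_eq_abs]
  exact h.abs_pow_mul_norm_le hj t

lemma FourierDecay.integrable_measureFourierInv (h : FourierDecay (q + 2) C ν) :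
    Integrable (measureFourierInv ν) := by
  simpa using h.integrable_pow_smul q.zero_le

lemma FourierDecay.contDiff_fourier (h : FourierDecay (q + 2) C ν) :
    ContDiff ℝ q (𝓕 (measureFourierInv ν)) := by
  refine Real.contDiff_fourier (N := (q : ℕ∞)) fun n hn => ?_
  simpa [norm_smul] using (h.integrable_pow_smul (Nat.cast_le.1 hn)).norm

lemma FourierDecay.contDiff_fourierDensity (h : FourierDecay (q + 2) C ν) :
    ContDiff ℝ q (fourierDensity ν) :=
  Complex.reCLM.contDiff.comp h.contDiff_fourier

lemma FourierDecay.iteratedDeriv_fourierDensity (h : FourierDecay (q + 2) C ν) (x : ℝ) :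
    iteratedDeriv q (fourierDensity ν) x =
      (𝓕 (fun t : ℝ => (-2 * Real.pi * Complex.I * t) ^ q • measureFourierInv ν t) x).re := by
  rw [← Real.iteratedDeriv_fourier (N := (q : ℕ∞))
    (fun n hn => h.integrable_pow_smul (Nat.cast_le.1 hn)) le_rfl,
    iteratedDeriv_eq_iteratedFDeriv, iteratedDeriv_eq_iteratedFDeriv]
  exact DFunLike.congr_fun
    (Complex.reCLM.iteratedFDeriv_comp_left h.contDiff_fourier.contDiffAt le_rfl) _

lemma FourierDecay.abs_iteratedDeriv_sub_le (hν : FourierDecay (q + 2) C ν)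
    (hμ : FourierDecay (q + 2) C' μ) (x : ℝ) :
    |iteratedDeriv q (fourierDensity ν) x - iteratedDeriv q (fourierDensity μ) x| ≤
      ∫ t, (2 * Real.pi) ^ q * (|t| ^ q * ‖measureFourierInv ν t - measureFourierInv μ t‖) := by
  have hint {ρ : Measure ℝ} [IsProbabilityMeasure ρ] {A : ℝ} (hρ : FourierDecay (q + 2) A ρ) :
      Integrable fun t : ℝ => (-2 * Real.pi * Complex.I * t) ^ q • measureFourierInv ρ t := by
    convert (hρ.integrable_pow_smul le_rfl).const_mul ((-2 * Real.pi * Complex.I) ^ q) using 2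
    simp only [smul_eq_mul, Complex.real_smul, Complex.ofReal_pow, mul_pow, mul_assoc]
  rw [hν.iteratedDeriv_fourierDensity, hμ.iteratedDeriv_fourierDensity, ← Complex.sub_re]
  refine ((Complex.abs_re_le_norm _).trans (norm_fourier_sub_le (hint hν) (hint hμ) x)).trans_eq ?_
  congr! with t
  rw [← smul_sub, norm_smul, norm_pow, ← mul_assoc, ← mul_pow]
  simp [abs_of_pos Real.pi_pos]

end FourierDecay

section Gaussian

lemma measureFourierInv_gaussianReal (t : ℝ) :
    measureFourierInv (gaussianReal 0 1) t = Real.exp (-(2 * Real.pi ^ 2 * t ^ 2)) := by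
  rw [measureFourierInv, charFun_gaussianReal]
  simp only [smul_eq_mul]
  push_cast
  ring_nf

lemma exists_fourierDecay_gaussianReal (s : ℕ) : ∃ C, FourierDecay s C (gaussianReal 0 1) := by
  refine ⟨s.factorial * Real.exp 2, fun t => ?_⟩
  have hexp : 1 + |t| - 2 * Real.pi ^ 2 * t ^ 2 ≤ 2 := by
    have hpi : 1 ≤ 2 * Real.pi ^ 2 := by nlinarith [Real.pi_gt_three]
    nlinarith [sq_nonneg (|t| - 1), sq_abs t, le_mul_of_one_le_left (sq_nonneg t) hpi]
  rw [measureFourierInv_gaussianReal, Complex.norm_real, Real.norm_eq_abs, Real.abs_exp]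
  calc (1 + |t|) ^ s * Real.exp (-(2 * Real.pi ^ 2 * t ^ 2))
      ≤ s.factorial * Real.exp (1 + |t|) * Real.exp (-(2 * Real.pi ^ 2 * t ^ 2)) := by
        gcongr
        exact pow_le_factorial_mul_exp (by positivity) s
    _ = s.factorial * Real.exp (1 + |t| - 2 * Real.pi ^ 2 * t ^ 2) := by
        rw [mul_assoc, ← Real.exp_add, sub_eq_add_neg]
    _ ≤ s.factorial * Real.exp 2 := by gcongr

lemma fourierDensity_gaussianReal : fourierDensity (gaussianReal 0 1) = gaussianPDFReal 0 1 := by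
  obtain ⟨C, hdecay⟩ := exists_fourierDecay_gaussianReal (0 + 2)
  have hcont := continuous_fourierDensity hdecay.integrable_measureFourierInv
  have hpdf : Continuous (gaussianPDFReal 0 1) := by unfold gaussianPDFReal; fun_prop
  have heq := eq_withDensity_fourierDensity hdecay.integrable_measureFourierInv
  nth_rw 1 [gaussianReal_of_var_ne_zero 0 one_ne_zero] at heq
  rw [withDensity_eq_iff_of_sigmaFinite (measurable_gaussianPDF 0 1).aemeasurable (by fun_prop)]
    at heq
  refine ((hpdf.ae_eq_iff_eq volume hcont).1 ?_).symm
  filter_upwards [heq] with x hx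
  exact (ENNReal.ofReal_eq_ofReal_iff (gaussianPDFReal_nonneg 0 1 x)
    (fourierDensity_nonneg hdecay.integrable_measureFourierInv x)).1 hx

end Gaussian

section Convergence

variable {ν : ℕ → Measure ℝ} [∀ n, IsProbabilityMeasure (ν n)] {μ : Measure ℝ}
  [IsProbabilityMeasure μ] {q : ℕ} {C C' : ℝ}

lemma tendsto_measureFourierInv (hlaw : TendstoInLaw ν μ) (t : ℝ) :
    Tendsto (fun n => measureFourierInv (ν n) t) atTop (𝓝 (measureFourierInv μ t)) :=
  ProbabilityMeasure.tendsto_iff_tendsto_charFun (μ := fun n => ⟨ν n, inferInstance⟩)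
    (μ₀ := ⟨μ, inferInstance⟩).1 (ProbabilityMeasure.tendsto_iff_forall_integral_tendsto.2 hlaw) _

lemma tendsto_integral_abs_pow_mul_norm_sub (hlaw : TendstoInLaw ν μ)
    (hν : ∀ᶠ n in atTop, FourierDecay (q + 2) C (ν n)) (hμ : FourierDecay (q + 2) C' μ) :
    Tendsto (fun n => ∫ t, (2 * Real.pi) ^ q *
      (|t| ^ q * ‖measureFourierInv (ν n) t - measureFourierInv μ t‖)) atTop (𝓝 0) := by
  rw [← integral_zero ℝ ℝ (μ := volume)]
  refine tendsto_integral_filter_of_dominated_convergence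
    (fun t => (2 * Real.pi) ^ q * ((C + C') * (1 + t ^ 2)⁻¹)) (Eventually.of_forall fun n => ?_) ?_
    ((integrable_inv_one_add_sq.const_mul _).const_mul _) (ae_of_all _ fun t => ?_)
  · have hcont_n := continuous_measureFourierInv (ν n)
    have hcont := continuous_measureFourierInv μ
    exact Continuous.aestronglyMeasurable (by fun_prop)
  · filter_upwards [hν] with n hn
    refine ae_of_all _ fun t => ?_
    rw [Real.norm_of_nonneg (by positivity)]
    refine mul_le_mul_of_nonneg_left ?_ (by positivity)
    calc |t| ^ q * ‖measureFourierInv (ν n) t - measureFourierInv μ t‖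
        ≤ |t| ^ q * (‖measureFourierInv (ν n) t‖ + ‖measureFourierInv μ t‖) := by
          gcongr
          exact norm_sub_le _ _
      _ ≤ C * (1 + t ^ 2)⁻¹ + C' * (1 + t ^ 2)⁻¹ := by
          rw [mul_add]
          exact add_le_add (hn.abs_pow_mul_norm_le le_rfl t) (hμ.abs_pow_mul_norm_le le_rfl t)
      _ = (C + C') * (1 + t ^ 2)⁻¹ := by ring
  · have h := (tendsto_measureFourierInv hlaw t).sub_const (measureFourierInv μ t)
    simpa using (h.norm.const_mul (|t| ^ q)).const_mul ((2 * Real.pi) ^ q)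

theorem eventually_abs_iteratedDeriv_sub_le (hlaw : TendstoInLaw ν μ)
    (hν : ∀ᶠ n in atTop, FourierDecay (q + 2) C (ν n)) (hμ : FourierDecay (q + 2) C' μ) {ε : ℝ}
    (hε : 0 < ε) : ∀ᶠ n in atTop, ∀ x,
      |iteratedDeriv q (fourierDensity (ν n)) x - iteratedDeriv q (fourierDensity μ) x| ≤ ε := by
  filter_upwards [hν, (tendsto_integral_abs_pow_mul_norm_sub hlaw hν hμ).eventually_le_const hε]
    with n hn hle x
  exact (hn.abs_iteratedDeriv_sub_le hμ x).trans hle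

end Convergence

section PolyLaw

variable {ι : Type} [Fintype ι]

lemma measureFourierInv_polyLaw (F : MvPolynomial ι ℝ) (t : ℝ) :
    measureFourierInv (polyLaw F) t = meanExpI ((2 * Real.pi * t) • F) := by
  rw [measureFourierInv, charFun_apply_real, integral_polyLaw (by fun_prop), meanExpI]
  simp

lemma decoupledCharFun_abs (k : ℕ) (F : MvPolynomial ι ℝ) (t : ℝ) :
    decoupledCharFun k F |t| = decoupledCharFun k F t := by
  obtain h | h := abs_choice t <;> simp [h, decoupledCharFun]

lemma exists_norm_measureFourierInv_polyLaw_pow_le (m : ℕ) : ∃ a : ℝ, 0 < a ∧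
    ∀ (ι : Type) [Fintype ι] (F : MvPolynomial ι ℝ), F ∈ hermiteSpace ι (m + 1) → ∀ t,
      ‖measureFourierInv (polyLaw F) t‖ ^ 2 ^ m ≤ decoupledCharFun (m + 1) F (a * |t|) := by
  obtain ⟨κ, hκ, hle⟩ := exists_norm_meanExpI_pow_le m
  refine ⟨2 * Real.pi * κ, by positivity, fun ι _ F hF t => ?_⟩
  rw [measureFourierInv_polyLaw]
  refine (hle ι _ (Submodule.smul_mem _ _ hF.2)).trans_eq ?_
  rw [decoupledCharFun_smul, ← decoupledCharFun_abs, abs_mul, abs_mul, abs_of_pos hκ,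
    abs_of_pos Real.two_pi_pos]
  ring_nf

lemma one_add_pow_mul_le {a u y C : ℝ} {s k : ℕ} (ha : 0 < a) (hu : 0 ≤ u) (hu1 : u ≤ 1)
    (hy : 0 ≤ y) (hC : 0 ≤ C) (hk : k ≠ 0) (h : 1 ≤ a * y → u ^ k * (a * y) ^ (s * k) ≤ C) :
    (1 + y) ^ s * u ≤ (1 + a⁻¹) ^ s * (1 + C) := by
  obtain hlt | hle := lt_or_ge (a * y) 1
  · have hy' : y ≤ a⁻¹ := (le_inv_mul_iff₀ ha).2 hlt.le |>.trans_eq (mul_one _)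
    gcongr
    linarith
  · have hprod : u * (a * y) ^ s ≤ 1 + C := by
      by_contra! hcon
      have hself := le_self_pow₀ (by linarith : 1 ≤ u * (a * y) ^ s) hk
      rw [mul_pow u, ← pow_mul] at hself
      linarith [h hle]
    have hy' : 1 + y ≤ (1 + a⁻¹) * (a * y) := by
      rw [add_mul, inv_mul_cancel_left₀ ha.ne']
      linarith
    calc (1 + y) ^ s * u ≤ ((1 + a⁻¹) * (a * y)) ^ s * u := by gcongr
      _ = (1 + a⁻¹) ^ s * (u * (a * y) ^ s) := by
        rw [mul_pow, mul_right_comm, mul_assoc, mul_comm u]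
      _ ≤ (1 + a⁻¹) ^ s * (1 + C) := by gcongr

theorem exists_fourierDecay_polyLaw (m s : ℕ) {c : ℝ} (hc : 0 < c) : ∃ τ C : ℝ, 0 < τ ∧
    ∀ (ι : Type) [Fintype ι] (F : MvPolynomial ι ℝ), F ∈ hermiteSpace ι (m + 1) →
      c ≤ expect (F * F) → (∀ r, 1 ≤ r → r < m + 1 → contractionNormSq r F F ≤ τ) →
      FourierDecay s C (polyLaw F) := by
  obtain ⟨a, ha, hle⟩ := exists_norm_measureFourierInv_polyLaw_pow_le m
  obtain ⟨τ, C, hτ, hC, hdecay⟩ := exists_decoupledCharFun_mul_pow_le m (s * 2 ^ m) hc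
  refine ⟨τ, (1 + a⁻¹) ^ s * (1 + C), hτ, fun ι _ F hF hvar hcontr t => ?_⟩
  refine one_add_pow_mul_le ha (norm_nonneg _) (norm_measureFourierInv_le_one _ t) (abs_nonneg t)
    hC (pow_ne_zero m two_ne_zero) fun ht => ?_
  grw [hle ι F hF t]
  exact hdecay ι F hF hvar hcontr _ ht

theorem exists_eventually_fourierDecay_polyLaw {m : ℕ} {ι : ℕ → Type} [∀ n, Fintype (ι n)]
    {P : (n : ℕ) → MvPolynomial (ι n) ℝ} (hP : ∀ n, P n ∈ hermiteSpace (ι n) (m + 1))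
    (hlaw : TendstoInLaw (fun n => polyLaw (P n)) (gaussianReal 0 1)) (s : ℕ) :
    ∃ C, ∀ᶠ n in atTop, FourierDecay s C (polyLaw (P n)) := by
  obtain ⟨τ, C, hτ, hdecay⟩ := exists_fourierDecay_polyLaw m s one_half_pos
  have hvar := (tendsto_expect_mul_self hP hlaw).eventually_const_le one_half_lt_one
  have hcontr : ∀ᶠ n in atTop, ∀ r ∈ Finset.Ico 1 (m + 1),
      contractionNormSq r (P n) (P n) ≤ τ := by
    refine (eventually_all_finset _).2 fun r hr => ?_
    obtain ⟨h1, hlt⟩ := Finset.mem_Ico.1 hr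
    exact (tendsto_contractionNormSq hP hlaw h1 hlt).eventually_le_const hτ
  refine ⟨C, ?_⟩
  filter_upwards [hvar, hcontr] with n hvar_n hcontr_n
  exact hdecay (ι n) (P n) (hP n) hvar_n fun r h1 hlt => hcontr_n r (Finset.mem_Ico.2 ⟨h1, hlt⟩)

end PolyLaw

end WienerChaos

/-- Superconvergence: along normal convergence on a Wiener chaos of fixed degree,
for each `q` the laws eventually have `C^q` densities whose `q`-th derivatives converge uniformly
on `ℝ` to the corresponding derivative of the standard Gaussian density. -/
theorem superconvergence_on_chaos (m : ℕ) (K : ℕ → ℕ)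
    (P : (n : ℕ) → MvPolynomial (Fin (K n)) ℝ)
    (hchaos : ∀ n, P n ∈ chaos (K n) m)
    (hnonconst : ∀ n, 0 < (P n).totalDegree)
    (hlaw : TendstoInLaw
      (fun n => Measure.map (fun x => eval x (P n)) (gaussPi (Fin (K n))))
      (gaussianReal 0 1)) :
    ∀ q : ℕ, ∃ (N : ℕ) (f : ℕ → ℝ → ℝ),
      (∀ n ≥ N,
        Measure.map (fun x => eval x (P n)) (gaussPi (Fin (K n)))
            = volume.withDensity (fun x => ENNReal.ofReal (f n x)) ∧
        (∀ x, 0 ≤ f n x) ∧ ContDiff ℝ q (f n)) ∧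
      (∀ ε > (0:ℝ), ∃ M : ℕ, ∀ n ≥ M, ∀ x : ℝ,
        |iteratedDeriv q (f n) x - iteratedDeriv q (gaussianPDFReal 0 1) x| ≤ ε) := by
  intro q
  have hP n := WienerChaos.chaos_le_hermiteSpace m (hchaos n)
  obtain _ | m := m
  · obtain ⟨c, hc⟩ := WienerChaos.exists_eq_C_of_mem_hermiteSpace_zero (hP 0)
    exact absurd (hnonconst 0) (by simp [hc])
  change TendstoInLaw (fun n => WienerChaos.polyLaw (P n)) _ at hlaw
  obtain ⟨C, hdecay⟩ := WienerChaos.exists_eventually_fourierDecay_polyLaw hP hlaw (q + 2)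
  obtain ⟨C', hgauss⟩ := WienerChaos.exists_fourierDecay_gaussianReal (q + 2)
  obtain ⟨N, hN⟩ := eventually_atTop.1 hdecay
  refine ⟨N, fun n => WienerChaos.fourierDensity (WienerChaos.polyLaw (P n)),
    fun n hn => ?_, fun ε hε => ?_⟩
  · have hint := (hN n hn).integrable_measureFourierInv
    exact ⟨WienerChaos.eq_withDensity_fourierDensity (ν := WienerChaos.polyLaw (P n)) hint,
      WienerChaos.fourierDensity_nonneg hint, (hN n hn).contDiff_fourierDensity⟩
  · rw [← WienerChaos.fourierDensity_gaussianReal]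
    exact eventually_atTop.1
      (WienerChaos.eventually_abs_iteratedDeriv_sub_le hlaw hdecay hgauss hε)
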